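/- arXiv:0803.3689 — 2 statements merged into one kernel-verified Lean document; each statement's English description precedes it below -/
import Mathlib

section
/- For a finitely generated graded Λ-module M and a finitely generated graded Γ-module N, there is an isomorphism of (A ⊕ B)-graded algebras End_{Λ ⊗_k^t Γ}(M ⊗_k^t N) ≅ End_Λ(M) ⊗_k^t End_Γ(N), where the endomorphism rings are graded by degree of homomorphisms. -/
open TensorProduct

/-
Let `τ_b` be the automorphism of `M` which is multiplication by `t(a, b)` on `M_a`. On `M ⊗ N` the
element `l ⊗ g` of the twisted algebra, with `g` of degree `b`, acts as `l τ_b ⊗ g`. Conjugating an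
endomorphism of `M ⊗ N` on each summand `M ⊗ N_b` of the source by `τ_b ⊗ 1` removes the twist: as
`τ` is additive in `b` and commutes with homogeneous elements of `Λ` up to scalars, the
conjugate commutes with the twisted action exactly if the original commutes with all `l ⊗ g` acting
untwisted. The latter endomorphisms are `End_Λ(M) ⊗ End_Γ(N)`: expanding in a basis of the other
tensor factor, a linear map from a finitely generated module has only finitely many nonzero
coordinates, so it is a finite sum of pure tensors.
-/

theorem finite_setOf_linearMap_ne_zero {R M N ι : Type*} [Semiring R] [AddCommMonoid M]
    [Module R M] [AddCommMonoid N] [Module R N] [Module.Finite R M] (f : ι → M →ₗ[R] N)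
    (hf : ∀ m, {i | f i m ≠ 0}.Finite) : {i | f i ≠ 0}.Finite := by
  obtain ⟨s, hs⟩ := Module.Finite.fg_top (R := R) (M := M)
  refine (s.finite_toSet.biUnion fun m _ => hf m).subset fun i hi => ?_
  by_contra hmem
  refine hi (LinearMap.ext_on hs fun m hm => ?_)
  simp only [Set.mem_iUnion, not_exists] at hmem
  simpa using hmem m hm

section FreeFactor

variable {k V : Type*} [CommSemiring k] [AddCommMonoid V] [Module k V]

section Coordinates

variable {P P' ι : Type*} [AddCommMonoid P] [Module k P] [AddCommMonoid P'] [Module k P']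
  [DecidableEq ι]

theorem equivFinsuppOfBasisRight_rTensor (b : Module.Basis ι k V) (f : P →ₗ[k] P')
    (z : P ⊗[k] V) (i : ι) :
    equivFinsuppOfBasisRight b (f.rTensor V z) i = f (equivFinsuppOfBasisRight b z i) := by
  induction z with
  | zero => simp
  | add x y hx hy => simp [hx, hy]
  | tmul p v => simp

end Coordinates

variable {R P P' : Type*} [Semiring R] [AddCommMonoid P] [Module R P]
  [AddCommMonoid P'] [Module k P'] [Module R P'] [SMulCommClass R k P'] [Module.Free k V]

theorem eq_of_rTensor_apply_eq {z z' : (P →ₗ[R] P') ⊗[k] V}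
    (h : ∀ p, (LinearMap.applyₗ' k p).rTensor V z = (LinearMap.applyₗ' k p).rTensor V z') :
    z = z' := by
  classical
  let b := Module.Free.chooseBasis k V
  refine (equivFinsuppOfBasisRight b).injective (Finsupp.ext fun i => LinearMap.ext fun p => ?_)
  simpa only [equivFinsuppOfBasisRight_rTensor, LinearMap.applyₗ'_apply_apply] using
    DFunLike.congr_fun (congrArg (equivFinsuppOfBasisRight b) (h p)) i

theorem eq_of_lTensor_apply_eq {z z' : V ⊗[k] (P →ₗ[R] P')}
    (h : ∀ p, (LinearMap.applyₗ' k p).lTensor V z = (LinearMap.applyₗ' k p).lTensor V z') :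
    z = z' := by
  refine (TensorProduct.comm k V _).injective (eq_of_rTensor_apply_eq fun p => ?_)
  rw [LinearMap.rTensor_comm, LinearMap.rTensor_comm, h p]

variable [Algebra k R] [IsScalarTower k R P']

theorem exists_rTensor_apply_eq [Module.Finite R P] (f : P →ₗ[R] P' ⊗[k] V) :
    ∃ z : (P →ₗ[R] P') ⊗[k] V, ∀ p, (LinearMap.applyₗ' k p).rTensor V z = f p := by
  classical
  let b := Module.Free.chooseBasis k V
  let c (i) : P →ₗ[R] P' := (AlgebraTensorModule.rid k R P').toLinearMap ∘ₗ
    AlgebraTensorModule.lTensor R P' (b.coord i) ∘ₗ f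
  have hc (i p) : c i p = equivFinsuppOfBasisRight b (f p) i :=
    (equivFinsuppOfBasisRight_apply b (f p) i).symm
  have c_finite : {i | c i ≠ 0}.Finite := finite_setOf_linearMap_ne_zero c fun p =>
    (equivFinsuppOfBasisRight b (f p)).hasFiniteSupport.subset fun i hi => by simpa [hc] using hi
  refine ⟨(equivFinsuppOfBasisRight b).symm (Finsupp.ofSupportFinite c c_finite), fun p => ?_⟩
  refine (equivFinsuppOfBasisRight b).injective (Finsupp.ext fun i => ?_)
  rw [equivFinsuppOfBasisRight_rTensor, LinearEquiv.apply_symm_apply]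
  exact hc i p

theorem exists_lTensor_apply_eq [Module k P] [IsScalarTower k R P] [Module.Finite R P]
    (f : P →ₗ[k] V ⊗[k] P')
    (hf : ∀ (r : R) p, f (r • p) = (Algebra.lsmul k k P' r).lTensor V (f p)) :
    ∃ z : V ⊗[k] (P →ₗ[R] P'), ∀ p, (LinearMap.applyₗ' k p).lTensor V z = f p := by
  let f' : P →ₗ[R] P' ⊗[k] V :=
    { toFun p := TensorProduct.comm k V P' (f p)
      map_add' := by simp
      map_smul' r p := by
        rw [hf, ← LinearMap.rTensor_comm, AlgebraTensorModule.smul_eq_lsmul_rTensor,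
          RingHom.id_apply] }
  obtain ⟨z, hz⟩ := exists_rTensor_apply_eq f'
  refine ⟨(TensorProduct.comm k V _).symm z, fun p => (TensorProduct.comm k V P').injective ?_⟩
  rw [← LinearMap.rTensor_comm, LinearEquiv.apply_symm_apply, hz p]
  rfl

end FreeFactor

section HomTensorHom

variable {k : Type*} (R S : Type*) {P P' Q Q' : Type*} [CommSemiring k]
  [Semiring R] [Algebra k R] [Semiring S] [Algebra k S]
  [AddCommMonoid P] [Module k P] [Module R P] [IsScalarTower k R P]
  [AddCommMonoid P'] [Module k P'] [Module R P'] [IsScalarTower k R P']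
  [AddCommMonoid Q] [Module k Q] [Module S Q] [IsScalarTower k S Q]
  [AddCommMonoid Q'] [Module k Q'] [Module S Q'] [IsScalarTower k S Q']

variable (k P P' Q Q') in
/-- The canonical map `Hom_R(P, P') ⊗ Hom_S(Q, Q') → Hom_k(P ⊗ Q, P' ⊗ Q')`. -/
noncomputable def homTensorHomRestrict :
    (P →ₗ[R] P') ⊗[k] (Q →ₗ[S] Q') →ₗ[k] P ⊗[k] Q →ₗ[k] P' ⊗[k] Q' :=
  homTensorHomMap (.id k) P Q P' Q' ∘ₗ
    map (LinearMap.restrictScalarsₗ k R P P' k) (LinearMap.restrictScalarsₗ k S Q Q' k)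

variable {R S}

theorem homTensorHomRestrict_tmul (φ : P →ₗ[R] P') (ψ : Q →ₗ[S] Q') :
    homTensorHomRestrict k R S P P' Q Q' (φ ⊗ₜ ψ) =
      map (φ.restrictScalars k) (ψ.restrictScalars k) :=
  rfl

theorem homTensorHomRestrict_apply_tmul (z : (P →ₗ[R] P') ⊗[k] (Q →ₗ[S] Q')) (p : P) (q : Q) :
    homTensorHomRestrict k R S P P' Q Q' z (p ⊗ₜ q) =
      (LinearMap.applyₗ' k q).lTensor P' ((LinearMap.applyₗ' k p).rTensor (Q →ₗ[S] Q') z) := by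
  induction z with
  | zero => simp
  | add x y hx hy => simp only [map_add, LinearMap.add_apply, hx, hy]
  | tmul φ ψ => simp [homTensorHomRestrict_tmul]

theorem homTensorHomRestrict_comp_map_lsmul (z : (P →ₗ[R] P') ⊗[k] (Q →ₗ[S] Q')) (r : R) (s : S) :
    homTensorHomRestrict k R S P P' Q Q' z ∘ₗ
        map (Algebra.lsmul k k P r) (Algebra.lsmul k k Q s) =
      map (Algebra.lsmul k k P' r) (Algebra.lsmul k k Q' s) ∘ₗ
        homTensorHomRestrict k R S P P' Q Q' z := by
  induction z with
  | zero => simp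
  | add x y hx hy => simp only [map_add, LinearMap.add_comp, LinearMap.comp_add, hx, hy]
  | tmul φ ψ => ext p q; simp [homTensorHomRestrict_tmul]

variable [Module.Free k P'] [Module.Free k (Q →ₗ[S] Q')]

theorem homTensorHomRestrict_injective :
    Function.Injective (homTensorHomRestrict k R S P P' Q Q') := fun z z' h =>
  eq_of_rTensor_apply_eq fun p => eq_of_lTensor_apply_eq fun q => by
    simp only [← homTensorHomRestrict_apply_tmul, h]

theorem mem_range_homTensorHomRestrict_iff [Module.Finite R P] [Module.Finite S Q]
    {F : P ⊗[k] Q →ₗ[k] P' ⊗[k] Q'} :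
    F ∈ LinearMap.range (homTensorHomRestrict k R S P P' Q Q') ↔
      ∀ (r : R) (s : S), F ∘ₗ map (Algebra.lsmul k k P r) (Algebra.lsmul k k Q s) =
        map (Algebra.lsmul k k P' r) (Algebra.lsmul k k Q' s) ∘ₗ F := by
  refine ⟨fun ⟨z, hz⟩ r s => hz ▸ homTensorHomRestrict_comp_map_lsmul z r s, fun hF => ?_⟩
  have F_smul (r : R) (s : S) (p q) : F ((r • p) ⊗ₜ (s • q)) =
      map (Algebra.lsmul k k P' r) (Algebra.lsmul k k Q' s) (F (p ⊗ₜ q)) :=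
    LinearMap.congr_fun (hF r s) (p ⊗ₜ q)
  have exists_column (p : P) : ∃ y : P' ⊗[k] (Q →ₗ[S] Q'),
      ∀ q, (LinearMap.applyₗ' k q).lTensor P' y = F (p ⊗ₜ q) :=
    exists_lTensor_apply_eq (F ∘ₗ mk k P Q p) fun s q => by
      simpa [LinearMap.lTensor, Module.End.one_eq_id] using F_smul 1 s p q
  choose y hy using exists_column
  have apply_smul (r : R) (x : P' ⊗[k] (Q →ₗ[S] Q')) (q : Q) :
      (LinearMap.applyₗ' k q).lTensor P' (r • x) =
        r • (LinearMap.applyₗ' k q).lTensor P' x :=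
    (AlgebraTensorModule.lTensor R P' (LinearMap.applyₗ' k q)).map_smul r x
  let yₗ : P →ₗ[R] P' ⊗[k] (Q →ₗ[S] Q') :=
    { toFun := y
      map_add' p p' := eq_of_lTensor_apply_eq fun q => by
        simp only [map_add, hy, add_tmul]
      map_smul' r p := eq_of_lTensor_apply_eq fun q => by
        rw [RingHom.id_apply, apply_smul, hy, hy, AlgebraTensorModule.smul_eq_lsmul_rTensor]
        simpa [LinearMap.rTensor, Module.End.one_eq_id] using F_smul r 1 p q }
  obtain ⟨z, hz⟩ := exists_rTensor_apply_eq yₗ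
  refine ⟨z, TensorProduct.ext' fun p q => ?_⟩
  rw [homTensorHomRestrict_apply_tmul, hz]
  exact hy p q

end HomTensorHom

section GradedScaling

variable {k ι M : Type*} [CommSemiring k] [DecidableEq ι] [AddCommMonoid M] [Module k M]
  (ℳ : ι → Submodule k M) [DirectSum.Decomposition ℳ]

/-- The automorphism of the graded module `M = ⨁ i, ℳ i` which acts on `ℳ i` as multiplication by
the unit `c i`. -/
noncomputable def gradedScaling (c : ι → kˣ) : M ≃ₗ[k] M :=
  DirectSum.decomposeLinearEquiv ℳ ≪≫ₗ
    DirectSum.congrLinearEquiv (fun i => LinearEquiv.smulOfUnit (c i)) ≪≫ₗ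
      (DirectSum.decomposeLinearEquiv ℳ).symm

theorem gradedScaling_apply_of_mem (c : ι → kˣ) {i : ι} {m : M} (hm : m ∈ ℳ i) :
    gradedScaling ℳ c m = (c i : k) • m := by
  lift m to ℳ i using hm
  rw [gradedScaling, LinearEquiv.trans_apply, LinearEquiv.trans_apply,
    DirectSum.decomposeLinearEquiv_apply_coe, DirectSum.coe_congrLinearEquiv, DirectSum.lmap_lof,
    DirectSum.decomposeLinearEquiv_symm_lof]
  rfl

theorem gradedScaling_mul (c d : ι → kˣ) :
    gradedScaling ℳ (c * d) = gradedScaling ℳ c * gradedScaling ℳ d := by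
  refine LinearEquiv.toLinearMap_injective (DirectSum.decompose_lhom_ext ℳ fun i => ?_)
  ext ⟨m, hm⟩
  simp [gradedScaling_apply_of_mem ℳ _ hm, mul_smul, smul_comm (c i : k)]

variable {ℳ}

theorem gradedScaling_map_apply (c : ι → kˣ) (f : M →ₗ[k] M) (γ : k) {d : ι → ι}
    (hf : ∀ i, ∀ m ∈ ℳ i, f m ∈ ℳ (d i)) (hc : ∀ i, (c (d i) : k) = γ * c i) (m : M) :
    gradedScaling ℳ c (f m) = γ • f (gradedScaling ℳ c m) := by
  suffices h : (gradedScaling ℳ c).toLinearMap ∘ₗ f =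
      γ • (f ∘ₗ (gradedScaling ℳ c).toLinearMap) from LinearMap.congr_fun h m
  refine DirectSum.decompose_lhom_ext ℳ fun i => ?_
  ext ⟨m, hm⟩
  simp [gradedScaling_apply_of_mem ℳ _ hm, gradedScaling_apply_of_mem ℳ _ (hf i m hm), hc, mul_smul]

end GradedScaling

theorem smul_map_comp_rTensor {k M N : Type*} [CommSemiring k] [AddCommMonoid M] [Module k M]
    [AddCommMonoid N] [Module k N] {v w : M ≃ₗ[k] M} {f : Module.End k M} {γ : k}
    (hf : ∀ m, (v * w) (f m) = γ • f ((v * w) m)) (g : Module.End k N) (x : M ⊗[k] N) :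
    γ • map (f ∘ₗ v) g (w.rTensor N x) = (v * w).rTensor N (map f g x) := by
  induction x with
  | zero => simp
  | add x y hx hy => simp only [map_add, smul_add, hx, hy]
  | tmul m n =>
    rw [LinearEquiv.rTensor_tmul, map_tmul, map_tmul, LinearEquiv.rTensor_tmul, hf, smul_tmul']
    rfl

section DegreewiseConjugation

variable {k B M N V : Type*} [CommSemiring k] [DecidableEq B] [AddCommMonoid M] [Module k M]
  [AddCommMonoid N] [Module k N] [AddCommMonoid V] [Module k V]
  (𝒩 : B → Submodule k N) [DirectSum.Decomposition 𝒩]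

variable (k M V) in
/-- A linear map out of `M ⊗ N`, where `N = ⨁ b, 𝒩 b`, amounts to a family of linear maps out of
the `M ⊗ 𝒩 b`, here in curried form. -/
noncomputable def tensorHomEquivPi : (M ⊗[k] N →ₗ[k] V) ≃ₗ[k] ∀ b, 𝒩 b →ₗ[k] M →ₗ[k] V :=
  (lift.equiv (.id k) M N V).symm ≪≫ₗ LinearMap.lflip ≪≫ₗ
    (DirectSum.decomposeLinearEquiv 𝒩).arrowCongr (.refl k (M →ₗ[k] V)) ≪≫ₗ
      (DFinsupp.lsum k).symm

theorem tensorHomEquivPi_apply (F : M ⊗[k] N →ₗ[k] V) (b : B) (n : 𝒩 b) (m : M) :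
    tensorHomEquivPi k M V 𝒩 F b n m = F (m ⊗ₜ n) :=
  congrArg (fun x => F (m ⊗ₜ x)) (DirectSum.decomposeLinearEquiv_symm_lof 𝒩 b n)

theorem tensor_hom_ext_of_mem_right {F G : M ⊗[k] N →ₗ[k] V}
    (h : ∀ b, ∀ n ∈ 𝒩 b, ∀ m, F (m ⊗ₜ n) = G (m ⊗ₜ n)) : F = G := by
  refine (tensorHomEquivPi k M V 𝒩).injective (funext fun b => ?_)
  ext n m
  simpa only [tensorHomEquivPi_apply] using h b n n.2 m

/-- Conjugation of endomorphisms of `M ⊗ N` which, on the summand `M ⊗ 𝒩 b` of the source, is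
conjugation by `u b ⊗ 1`. -/
noncomputable def degreeConj (u : B → M ≃ₗ[k] M) :
    Module.End k (M ⊗[k] N) ≃ₗ[k] Module.End k (M ⊗[k] N) :=
  tensorHomEquivPi k M (M ⊗[k] N) 𝒩 ≪≫ₗ
    LinearEquiv.piCongrRight (fun b => LinearEquiv.arrowCongr (.refl k (𝒩 b))
      ((u b).arrowCongr ((u b).rTensor N))) ≪≫ₗ
      (tensorHomEquivPi k M (M ⊗[k] N) 𝒩).symm

variable (u : B → M ≃ₗ[k] M)

theorem degreeConj_apply_tmul (F : Module.End k (M ⊗[k] N)) {b : B} (m : M) {n : N}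
    (hn : n ∈ 𝒩 b) :
    degreeConj 𝒩 u F (m ⊗ₜ n) = (u b).rTensor N (F ((u b).symm m ⊗ₜ n)) := by
  lift n to 𝒩 b using hn
  rw [← tensorHomEquivPi_apply, degreeConj]
  simp [tensorHomEquivPi_apply]

theorem degreeConj_one : degreeConj 𝒩 u 1 = 1 :=
  tensor_hom_ext_of_mem_right 𝒩 fun b n hn m => by simp [degreeConj_apply_tmul 𝒩 u 1 m hn]

variable {𝒩 u}

theorem degreeConj_map_apply_tmul {f : Module.End k M} {b : B} {γ : k}
    (hf : ∀ m, u b (f m) = γ • f (u b m)) (g : Module.End k N) (m : M) {n : N} (hn : n ∈ 𝒩 b) :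
    degreeConj 𝒩 u (map f g) (m ⊗ₜ n) = γ • (f m ⊗ₜ g n) := by
  rw [degreeConj_apply_tmul 𝒩 u _ m hn, map_tmul, LinearEquiv.rTensor_tmul, hf,
    LinearEquiv.apply_symm_apply, smul_tmul']

variable [Add B] (hu : ∀ b b', u (b + b') = u b * u b')

include hu

theorem degreeConj_map_mul_degreeConj_map {f f' : Module.End k M} {g g' : Module.End k N} {c : B}
    {γ : k} (hf : ∀ m, u c (f m) = γ • f (u c m)) (hg' : ∀ b, ∀ n ∈ 𝒩 b, g' n ∈ 𝒩 (b + c)) :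
    degreeConj 𝒩 u (map f g) * degreeConj 𝒩 u (map f' g') =
      γ • degreeConj 𝒩 u (map (f * f') (g * g')) := by
  refine tensor_hom_ext_of_mem_right 𝒩 fun b n hn m => ?_
  have hcancel (m : M) : u (b + c) (f ((u (b + c)).symm (u b m))) = γ • u b (f m) := by
    obtain ⟨m, rfl⟩ := (u c).surjective m
    rw [← LinearEquiv.mul_apply (u b), ← hu, LinearEquiv.symm_apply_apply, hu,
      LinearEquiv.mul_apply, hf, map_smul]
  simp only [Module.End.mul_apply, LinearMap.smul_apply, degreeConj_apply_tmul 𝒩 u _ _ hn,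
    degreeConj_apply_tmul 𝒩 u _ _ (hg' b n hn), map_tmul, LinearEquiv.rTensor_tmul, smul_tmul',
    hcancel]

theorem commute_degreeConj_map_iff {F : Module.End k (M ⊗[k] N)} {f : Module.End k M}
    {g : Module.End k N} {χ : B → kˣ} (hf : ∀ b m, u b (f m) = (χ b : k) • f (u b m)) {c : B}
    (hg : ∀ b, ∀ n ∈ 𝒩 b, g n ∈ 𝒩 (c + b)) :
    Commute (degreeConj 𝒩 u F) (map (f ∘ₗ u c) g) ↔ Commute F (map f g) := by
  have left (b m) {n} (hn : n ∈ 𝒩 b) :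
      (χ (c + b) : k) • degreeConj 𝒩 u F (map (f ∘ₗ u c) g (u b m ⊗ₜ n)) =
        (u (c + b)).rTensor N (F (map f g (m ⊗ₜ n))) := by
    rw [← map_smul, ← LinearEquiv.rTensor_tmul, smul_map_comp_rTensor (hu c b ▸ hf (c + b)), ← hu,
      map_tmul, LinearEquiv.rTensor_tmul, degreeConj_apply_tmul 𝒩 u F _ (hg b n hn),
      LinearEquiv.symm_apply_apply]
  have right (b m) {n} (hn : n ∈ 𝒩 b) :
      (χ (c + b) : k) • map (f ∘ₗ u c) g (degreeConj 𝒩 u F (u b m ⊗ₜ n)) =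
        (u (c + b)).rTensor N (map f g (F (m ⊗ₜ n))) := by
    rw [degreeConj_apply_tmul 𝒩 u F _ hn, LinearEquiv.symm_apply_apply,
      smul_map_comp_rTensor (hu c b ▸ hf (c + b)), ← hu]
  have hiff (b m) {n} (hn : n ∈ 𝒩 b) :
      degreeConj 𝒩 u F (map (f ∘ₗ u c) g (u b m ⊗ₜ n)) =
          map (f ∘ₗ u c) g (degreeConj 𝒩 u F (u b m ⊗ₜ n)) ↔
        F (map f g (m ⊗ₜ n)) = map f g (F (m ⊗ₜ n)) := by
    rw [← (χ (c + b)).isUnit.smul_left_cancel, left b m hn, right b m hn,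
      EmbeddingLike.apply_eq_iff_eq]
  refine ⟨fun h => tensor_hom_ext_of_mem_right 𝒩 fun b n hn m =>
      (hiff b m hn).1 (LinearMap.congr_fun h (u b m ⊗ₜ n)),
    fun h => tensor_hom_ext_of_mem_right 𝒩 fun b n hn m => ?_⟩
  obtain ⟨m, rfl⟩ := (u b).surjective m
  exact (hiff b m hn).2 (LinearMap.congr_fun h (m ⊗ₜ n))

end DegreewiseConjugation

section RangeEq

variable {R X Y Z : Type*} [Semiring R] [AddCommMonoid X] [Module R X]
  [AddCommMonoid Y] [Module R Y] [AddCommMonoid Z] [Module R Z] {f : X →ₗ[R] Z} {g : Y →ₗ[R] Z}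

/-- The isomorphism between the sources of two injective linear maps `f` and `g` with the same
range, characterized by the fact that `g` composed with it is `f`. -/
noncomputable def linearEquivOfRangeEq (hf : Function.Injective f) (hg : Function.Injective g)
    (h : LinearMap.range f = LinearMap.range g) : X ≃ₗ[R] Y :=
  .ofInjective f hf ≪≫ₗ .ofEq _ _ h ≪≫ₗ (LinearEquiv.ofInjective g hg).symm

theorem apply_linearEquivOfRangeEq (hf : Function.Injective f) (hg : Function.Injective g)
    (h : LinearMap.range f = LinearMap.range g) (x : X) :
    g (linearEquivOfRangeEq hf hg h x) = f x :=
  congrArg Subtype.val <|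
    (LinearEquiv.ofInjective g hg).apply_symm_apply
      (LinearEquiv.ofEq _ _ h (LinearEquiv.ofInjective f hf x))

end RangeEq

section Twist

variable {k A B M : Type*} [CommSemiring k] [DecidableEq A] [AddCommMonoid M] [Module k M]
  (ℳ : A → Submodule k M) [DirectSum.Decomposition ℳ] (t : A → B → kˣ)

/-- The automorphism of `M = ⨁ a, ℳ a` acting on `ℳ a` as multiplication by `t a b`: it accounts
for the factor `t a b` in the twisted action of elements of degree `b` on `M ⊗ N`. -/
noncomputable def gradedTwist (b : B) : M ≃ₗ[k] M :=
  gradedScaling ℳ fun a => t a b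

variable {t}

theorem gradedTwist_add [Add B] (ht : ∀ a b b', t a (b + b') = t a b * t a b') (b b' : B) :
    gradedTwist ℳ t (b + b') = gradedTwist ℳ t b * gradedTwist ℳ t b' := by
  simp only [gradedTwist, ht]
  exact gradedScaling_mul ℳ _ _

variable {ℳ}

theorem gradedTwist_map_apply [Add A] (ht : ∀ a a' b, t (a + a') b = t a b * t a' b)
    {f : Module.End k M} {a : A} (hf : ∀ p, ∀ m ∈ ℳ p, f m ∈ ℳ (p + a)) (b : B) (m : M) :
    gradedTwist ℳ t b (f m) = (t a b : k) • f (gradedTwist ℳ t b m) :=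
  gradedScaling_map_apply _ f _ hf (fun p => by rw [ht, mul_comm, Units.val_mul]) m

theorem lsmul_eq_map_gradedTwist {Λ Γ T N : Type*} [Semiring Λ] [Algebra k Λ] [Semiring Γ]
    [Algebra k Γ] [Semiring T] [Algebra k T] [Module Λ M] [IsScalarTower k Λ M] [AddCommMonoid N]
    [Module k N] [Module Γ N] [IsScalarTower k Γ N] [Module T (M ⊗[k] N)]
    [IsScalarTower k T (M ⊗[k] N)] {r : T} {l : Λ} {g : Γ} {b : B}
    (hr : ∀ a, ∀ m ∈ ℳ a, ∀ n : N,
      r • (m ⊗ₜ n : M ⊗[k] N) = (t a b : k) • ((l • m) ⊗ₜ (g • n))) :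
    Algebra.lsmul k k (M ⊗[k] N) r =
      map (Algebra.lsmul k k M l ∘ₗ gradedTwist ℳ t b) (Algebra.lsmul k k N g) := by
  refine TensorProduct.ext (DirectSum.decompose_lhom_ext ℳ fun a => ?_)
  ext ⟨m, hm⟩ n
  simp [gradedTwist, gradedScaling_apply_of_mem ℳ _ hm, hr a m hm n, smul_tmul', smul_comm l]

end Twist

theorem mem_range_restrictScalars_iff {k T V : Type*} [CommSemiring k] [Semiring T] [Algebra k T]
    [AddCommMonoid V] [Module k V] [Module T V] [IsScalarTower k T V] {G : Module.End k V} :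
    G ∈ LinearMap.range (LinearMap.restrictScalarsₗ k T V V k) ↔
      ∀ r : T, Commute G (Algebra.lsmul k k V r) := by
  refine ⟨?_, fun h => ⟨{ G with map_smul' := fun r v => LinearMap.congr_fun (h r) v }, rfl⟩⟩
  rintro ⟨G, rfl⟩ r
  ext v
  exact G.map_smul r v

section Untwisting

variable {k A B Λ Γ T M N : Type*} [CommSemiring k] [DecidableEq A] [DecidableEq B]
  [Semiring Λ] [Algebra k Λ] [Semiring Γ] [Algebra k Γ] [Semiring T] [Algebra k T]
  [AddCommMonoid M] [Module k M] [Module Λ M] [IsScalarTower k Λ M]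
  [AddCommMonoid N] [Module k N] [Module Γ N] [IsScalarTower k Γ N]

section Homogeneous

variable (𝒜 : A → Submodule k Λ) [DirectSum.Decomposition 𝒜]
  (ℬ : B → Submodule k Γ) [DirectSum.Decomposition ℬ]

theorem commute_apply_of_homogeneous {E : Type*} [Semiring E] [Algebra k E]
    (ρ : Λ ⊗[k] Γ →ₗ[k] E) {G : E}
    (h : ∀ a, ∀ l ∈ 𝒜 a, ∀ b, ∀ g ∈ ℬ b, Commute G (ρ (l ⊗ₜ g))) (x : Λ ⊗[k] Γ) :
    Commute G (ρ x) := by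
  suffices heq : LinearMap.mulLeft k G ∘ₗ ρ = LinearMap.mulRight k G ∘ₗ ρ from
    LinearMap.congr_fun heq x
  refine tensor_hom_ext_of_mem_right ℬ fun b g hg l => ?_
  induction l using DirectSum.Decomposition.inductionOn 𝒜 with
  | zero => simp
  | homogeneous l => exact h _ l l.2 b g hg
  | add l l' hl hl' => rw [add_tmul, map_add, map_add, hl, hl']

theorem mem_range_homTensorHomRestrict_iff_of_homogeneous
    [Module.Finite Λ M] [Module.Finite Γ N] [Module.Free k M] [Module.Free k (Module.End Γ N)]
    {F : Module.End k (M ⊗[k] N)} :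
    F ∈ LinearMap.range (homTensorHomRestrict k Λ Γ M M N N) ↔
      ∀ a, ∀ l ∈ 𝒜 a, ∀ b, ∀ g ∈ ℬ b,
        Commute F (map (Algebra.lsmul k k M l) (Algebra.lsmul k k N g)) :=
  mem_range_homTensorHomRestrict_iff.trans ⟨fun h _ l _ _ g _ => h l g, fun h l g =>
    commute_apply_of_homogeneous 𝒜 ℬ (homTensorHomMap (.id k) M N M N ∘ₗ
      map (Algebra.lsmul k k M).toLinearMap (Algebra.lsmul k k N).toLinearMap) h (l ⊗ₜ g)⟩

theorem mem_range_restrictScalars_iff_of_homogeneous {e : Λ ⊗[k] Γ →ₗ[k] T}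
    (he : Function.Surjective e) {V : Type*} [AddCommMonoid V] [Module k V] [Module T V]
    [IsScalarTower k T V] {G : Module.End k V} :
    G ∈ LinearMap.range (LinearMap.restrictScalarsₗ k T V V k) ↔
      ∀ a, ∀ l ∈ 𝒜 a, ∀ b, ∀ g ∈ ℬ b, Commute G (Algebra.lsmul k k V (e (l ⊗ₜ g))) :=
  mem_range_restrictScalars_iff.trans ⟨fun h _ l _ _ g _ => h (e (l ⊗ₜ g)), fun h =>
    he.forall.2 <| commute_apply_of_homogeneous 𝒜 ℬ ((Algebra.lsmul k k V).toLinearMap ∘ₗ e) h⟩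

end Homogeneous

theorem range_degreeConj_comp_homTensorHomRestrict [AddCommMagma A] [Add B]
    [Module T (M ⊗[k] N)] [IsScalarTower k T (M ⊗[k] N)]
    (𝒜 : A → Submodule k Λ) [DirectSum.Decomposition 𝒜]
    (ℬ : B → Submodule k Γ) [DirectSum.Decomposition ℬ]
    (ℳ : A → Submodule k M) [DirectSum.Decomposition ℳ]
    (𝒩 : B → Submodule k N) [DirectSum.Decomposition 𝒩]
    {t : A → B → kˣ} {e : Λ ⊗[k] Γ →ₗ[k] T}
    [Module.Finite Λ M] [Module.Finite Γ N] [Module.Free k M] [Module.Free k (Module.End Γ N)]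
    (ht₁ : ∀ a a' b, t (a + a') b = t a b * t a' b)
    (ht₂ : ∀ a b b', t a (b + b') = t a b * t a b')
    (hℳ : ∀ {a a'} (l : Λ) (m : M), l ∈ 𝒜 a → m ∈ ℳ a' → l • m ∈ ℳ (a + a'))
    (h𝒩 : ∀ {b b'} (g : Γ) (n : N), g ∈ ℬ b → n ∈ 𝒩 b' → g • n ∈ 𝒩 (b + b'))
    (he : Function.Surjective e)
    (hact : ∀ (a : A) (b : B) (l : Λ) (g : Γ) (m : M) (n : N), g ∈ ℬ b → m ∈ ℳ a →
      e (l ⊗ₜ g) • (m ⊗ₜ n : M ⊗[k] N) = (t a b : k) • ((l • m) ⊗ₜ (g • n))) :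
    LinearMap.range ((degreeConj 𝒩 (gradedTwist ℳ t)).toLinearMap ∘ₗ
        homTensorHomRestrict k Λ Γ M M N N) =
      LinearMap.range (LinearMap.restrictScalarsₗ k T (M ⊗[k] N) (M ⊗[k] N) k) := by
  ext G
  obtain ⟨F, rfl⟩ := (degreeConj 𝒩 (gradedTwist ℳ t)).surjective G
  have untwist {a l} (hl : l ∈ 𝒜 a) {b g} (hg : g ∈ ℬ b) :
      Commute (degreeConj 𝒩 (gradedTwist ℳ t) F) (Algebra.lsmul k k (M ⊗[k] N) (e (l ⊗ₜ g))) ↔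
        Commute F (map (Algebra.lsmul k k M l) (Algebra.lsmul k k N g)) := by
    rw [lsmul_eq_map_gradedTwist fun a m hm n => hact a b l g m n hg hm]
    exact commute_degreeConj_map_iff (gradedTwist_add ℳ ht₂)
      (gradedTwist_map_apply ht₁ fun p m hm => add_comm a p ▸ hℳ l m hl hm) fun _ n => h𝒩 g n hg
  calc
    _ ↔ F ∈ LinearMap.range (homTensorHomRestrict k Λ Γ M M N N) := by simp [LinearMap.mem_range]
    _ ↔ ∀ a, ∀ l ∈ 𝒜 a, ∀ b, ∀ g ∈ ℬ b,
        Commute F (map (Algebra.lsmul k k M l) (Algebra.lsmul k k N g)) :=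
      mem_range_homTensorHomRestrict_iff_of_homogeneous 𝒜 ℬ
    _ ↔ ∀ a, ∀ l ∈ 𝒜 a, ∀ b, ∀ g ∈ ℬ b, Commute (degreeConj 𝒩 (gradedTwist ℳ t) F)
        (Algebra.lsmul k k (M ⊗[k] N) (e (l ⊗ₜ g))) :=
      forall₃_congr fun _ _ hl => forall₃_congr fun _ _ hg => (untwist hl hg).symm
    _ ↔ _ := (mem_range_restrictScalars_iff_of_homogeneous 𝒜 ℬ he).symm

end Untwisting

theorem stmt6_general {k A B Λ Γ T M N : Type*} [CommSemiring k]
    [AddCommMagma A] [Add B] [DecidableEq A] [DecidableEq B]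
    [Semiring Λ] [Algebra k Λ] [Semiring Γ] [Algebra k Γ]
    (𝒜 : A → Submodule k Λ) (ℬ : B → Submodule k Γ)
    [DirectSum.Decomposition 𝒜] [DirectSum.Decomposition ℬ]
    (t : A → B → kˣ)
    (ht₁ : ∀ a a' b, t (a + a') b = t a b * t a' b)
    (ht₂ : ∀ a b b', t a (b + b') = t a b * t a b')
    [Semiring T] [Algebra k T] (e : Λ ⊗[k] Γ →ₗ[k] T) (he : Function.Surjective e)
    [AddCommMonoid M] [Module k M] [Module Λ M] [IsScalarTower k Λ M]
    (ℳ : A → Submodule k M) [DirectSum.Decomposition ℳ]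
    (hℳ : ∀ {a a'} (l : Λ) (m : M), l ∈ 𝒜 a → m ∈ ℳ a' → l • m ∈ ℳ (a + a'))
    [Module.Finite Λ M] [Module.Free k M]
    [AddCommMonoid N] [Module k N] [Module Γ N] [IsScalarTower k Γ N]
    (𝒩 : B → Submodule k N) [DirectSum.Decomposition 𝒩]
    (h𝒩 : ∀ {b b'} (g : Γ) (n : N), g ∈ ℬ b → n ∈ 𝒩 b' → g • n ∈ 𝒩 (b + b'))
    [Module.Finite Γ N] [Module.Free k (Module.End Γ N)]
    [Module T (M ⊗[k] N)] [IsScalarTower k T (M ⊗[k] N)]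
    (hact : ∀ (am : A) (bg : B) (l : Λ) (g : Γ) (m : M) (n : N), g ∈ ℬ bg → m ∈ ℳ am →
      e (l ⊗ₜ g) • (m ⊗ₜ n : M ⊗[k] N) = (t am bg : k) • ((l • m) ⊗ₜ (g • n))) :
    ∃ Φ : ((Module.End Λ M) ⊗[k] (Module.End Γ N)) ≃ₗ[k] Module.End T (M ⊗[k] N),
      Φ (1 ⊗ₜ 1) = 1 ∧
      (∀ (a : A) (bn : B) (φ : Module.End Λ M) (ψ : Module.End Γ N) (m : M) (n : N),
        (∀ p : A, ∀ x ∈ ℳ p, φ x ∈ ℳ (p + a)) → n ∈ 𝒩 bn →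
        Φ (φ ⊗ₜ ψ) (m ⊗ₜ n) = (t a bn : k) • ((φ m) ⊗ₜ (ψ n))) ∧
      (∀ (a : A) (b : B) (φ φ' : Module.End Λ M) (ψ ψ' : Module.End Γ N),
        (∀ p : A, ∀ x ∈ ℳ p, φ x ∈ ℳ (p + a)) →
        (∀ q : B, ∀ y ∈ 𝒩 q, ψ' y ∈ 𝒩 (q + b)) →
        Φ (φ ⊗ₜ ψ) * Φ (φ' ⊗ₜ ψ') = (t a b : k) • Φ ((φ * φ') ⊗ₜ (ψ * ψ'))) := by
  let W := (degreeConj 𝒩 (gradedTwist ℳ t)).toLinearMap ∘ₗ homTensorHomRestrict k Λ Γ M M N N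
  have W_injective : Function.Injective W :=
    (degreeConj 𝒩 (gradedTwist ℳ t)).injective.comp homTensorHomRestrict_injective
  have restrict_injective :
      Function.Injective (LinearMap.restrictScalarsₗ k T (M ⊗[k] N) (M ⊗[k] N) k) :=
    LinearMap.restrictScalars_injective k
  have range_eq := range_degreeConj_comp_homTensorHomRestrict 𝒜 ℬ ℳ 𝒩 ht₁ ht₂ hℳ h𝒩 he hact
  let Φ := linearEquivOfRangeEq W_injective restrict_injective range_eq
  have restrict_Φ (φ : Module.End Λ M) (ψ : Module.End Γ N) :
      (Φ (φ ⊗ₜ ψ)).restrictScalars k = degreeConj 𝒩 (gradedTwist ℳ t)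
        (map (φ.restrictScalars k) (ψ.restrictScalars k)) :=
    apply_linearEquivOfRangeEq W_injective restrict_injective range_eq (φ ⊗ₜ ψ)
  refine ⟨Φ, restrict_injective ?_, fun a b φ ψ m n hφ hn => ?_,
    fun a b φ φ' ψ ψ' hφ hψ' => restrict_injective ?_⟩
  · calc (Φ (1 ⊗ₜ 1)).restrictScalars k = degreeConj 𝒩 (gradedTwist ℳ t) (map 1 1) :=
        restrict_Φ 1 1
      _ = 1 := by rw [TensorProduct.map_one, degreeConj_one]
  · rw [← LinearMap.restrictScalars_apply k, restrict_Φ]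
    exact degreeConj_map_apply_tmul (gradedTwist_map_apply ht₁ hφ b) _ m hn
  · calc (Φ (φ ⊗ₜ ψ) * Φ (φ' ⊗ₜ ψ')).restrictScalars k
        = (Φ (φ ⊗ₜ ψ)).restrictScalars k * (Φ (φ' ⊗ₜ ψ')).restrictScalars k := rfl
      _ = (t a b : k) • (Φ ((φ * φ') ⊗ₜ (ψ * ψ'))).restrictScalars k := by
        rw [restrict_Φ, restrict_Φ, restrict_Φ]
        exact degreeConj_map_mul_degreeConj_map (gradedTwist_add ℳ ht₂)
          (gradedTwist_map_apply ht₁ hφ b) hψ'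

/-- For a finitely generated graded `Λ`-module `M` and a finitely
generated graded `Γ`-module `N`, there is an isomorphism of `(A ⊕ B)`-graded algebras
`End_{Λ⊗ᵗΓ}(M ⊗ᵗ N) ≅ End_Λ(M) ⊗ᵗ End_Γ(N)`, the endomorphism rings being graded by
degrees of homomorphisms: the isomorphism sends `φ ⊗ ψ` (with `φ` of degree `a`, `ψ` of
degree `b`) to the endomorphism `m ⊗ n ↦ t⟨a,|n|⟩ φ(m) ⊗ ψ(n)`, it is unital, and it is
multiplicative for the `t`-twisted product on `End_Λ(M) ⊗ End_Γ(N)`. -/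
theorem stmt6 {k A B Λ Γ T M N : Type} [Field k]
    [AddCommGroup A] [AddCommGroup B] [DecidableEq A] [DecidableEq B]
    [Ring Λ] [Algebra k Λ] [Ring Γ] [Algebra k Γ]
    (𝒜 : A → Submodule k Λ) (ℬ : B → Submodule k Γ)
    [GradedAlgebra 𝒜] [GradedAlgebra ℬ]
    (t : A → B → kˣ)
    (ht₁ : ∀ a a' b, t (a + a') b = t a b * t a' b)
    (ht₂ : ∀ a b b', t a (b + b') = t a b * t a b')
    [Ring T] [Algebra k T] (e : (Λ ⊗[k] Γ) ≃ₗ[k] T)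
    (he1 : e (1 ⊗ₜ 1) = 1)
    (hemul : ∀ {a b} (x x' : Λ) (y y' : Γ), x' ∈ 𝒜 a → y ∈ ℬ b →
      e (x ⊗ₜ y) * e (x' ⊗ₜ y') = (t a b : k) • e ((x * x') ⊗ₜ (y * y')))
    -- M a finitely generated graded Λ-module
    [AddCommGroup M] [Module k M] [Module Λ M] [IsScalarTower k Λ M] [SMulCommClass Λ k M]
    (ℳ : A → Submodule k M) [DirectSum.Decomposition ℳ]
    (hℳ : ∀ {a a'} (l : Λ) (m : M), l ∈ 𝒜 a → m ∈ ℳ a' → l • m ∈ ℳ (a + a'))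
    [Module.Finite Λ M]
    -- N a finitely generated graded Γ-module
    [AddCommGroup N] [Module k N] [Module Γ N] [IsScalarTower k Γ N] [SMulCommClass Γ k N]
    (𝒩 : B → Submodule k N) [DirectSum.Decomposition 𝒩]
    (h𝒩 : ∀ {b b'} (g : Γ) (n : N), g ∈ ℬ b → n ∈ 𝒩 b' → g • n ∈ 𝒩 (b + b'))
    [Module.Finite Γ N]
    -- the twisted T-module structure on M ⊗[k] N
    [Module T (M ⊗[k] N)] [IsScalarTower k T (M ⊗[k] N)] [SMulCommClass T k (M ⊗[k] N)]
    (hact : ∀ (am : A) (bg : B) (l : Λ) (g : Γ) (m : M) (n : N), g ∈ ℬ bg → m ∈ ℳ am →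
      e (l ⊗ₜ g) • (m ⊗ₜ n : M ⊗[k] N) = (t am bg : k) • ((l • m) ⊗ₜ (g • n))) :
    ∃ Φ : ((Module.End Λ M) ⊗[k] (Module.End Γ N)) ≃ₗ[k] Module.End T (M ⊗[k] N),
      -- unital
      Φ (1 ⊗ₜ 1) = 1 ∧
      -- `Φ (φ ⊗ ψ)` is the twisted tensor product endomorphism (for `φ` homogeneous of
      -- degree `a` and `n` homogeneous of degree `bn`)
      (∀ (a : A) (bn : B) (φ : Module.End Λ M) (ψ : Module.End Γ N) (m : M) (n : N),
        (∀ p : A, ∀ x ∈ ℳ p, φ x ∈ ℳ (p + a)) → n ∈ 𝒩 bn →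
        Φ (φ ⊗ₜ ψ) (m ⊗ₜ n) = (t a bn : k) • ((φ m) ⊗ₜ (ψ n))) ∧
      -- multiplicative for the twisted product of the graded algebras
      -- `End_Λ(M)` and `End_Γ(N)`
      (∀ (a : A) (b : B) (φ φ' : Module.End Λ M) (ψ ψ' : Module.End Γ N),
        (∀ p : A, ∀ x ∈ ℳ p, φ x ∈ ℳ (p + a)) →
        (∀ q : B, ∀ y ∈ 𝒩 q, ψ' y ∈ 𝒩 (q + b)) →
        Φ (φ ⊗ₜ ψ) * Φ (φ' ⊗ₜ ψ') = (t a b : k) • Φ ((φ * φ') ⊗ₜ (ψ * ψ'))) :=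
  stmt6_general 𝒜 ℬ t ht₁ ht₂ e.toLinearMap e.surjective ℳ hℳ 𝒩 h𝒩 hact
end

section
/- If P_• → M → 0 is a graded projective resolution of the graded Λ-module M and Q_• → N → 0 is a graded projective resolution of the graded Γ-module N, then the total complex of the double complex P_• ⊗_k^t Q_• is a graded projective resolution of M ⊗_k^t N over Λ ⊗_k^t Γ. -/
open TensorProduct DirectSum

/-- The `(i,j)`-component `P i ⊗[k] Q j` of the total complex. -/
abbrev TotTerm (k : Type) [Field k] (P Q : ℕ → Type)
    [∀ i, AddCommGroup (P i)] [∀ i, Module k (P i)]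
    [∀ j, AddCommGroup (Q j)] [∀ j, Module k (Q j)]
    {n : ℕ} (p : {p : ℕ × ℕ // p.1 + p.2 = n}) : Type :=
  P p.1.1 ⊗[k] Q p.1.2

/-
Projectivity: the `T`-linear maps out of `P ⊗ᵗ Γ` are the `Λ`-linear maps out of `P`, so for every
`q : Q` the map `p ↦ p ⊗ q` lifts along a surjection onto `P ⊗ᵗ Q`; a `Γ`-linear section of
`(Q →₀ Γ) → Q` assembles these lifts into a splitting.

Exactness: the total complex does not depend on the twist as a complex of `k`-modules, and over a
semisimple ring the two resolutions have contractions `(σ, s)` and `(σ', s')`. The maps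
`s ⊗ 1 + σ ε ⊗ s'` contract the total complex. The second summand has support on the column
`P₀ ⊗ Q_•`, and there it corrects the failure of `s ⊗ 1` to contract, which is `σ ε ⊗ 1`.
-/

section HomogeneousLift

variable {k ι κ M N Y : Type*} [CommSemiring k] [DecidableEq ι] [DecidableEq κ]
  [AddCommMonoid M] [Module k M] [AddCommMonoid N] [Module k N] [AddCommMonoid Y] [Module k Y]
  (ℳ : ι → Submodule k M) [DirectSum.Decomposition ℳ]
  (𝒩 : κ → Submodule k N) [DirectSum.Decomposition 𝒩]

/-- The linear map which agrees with `φ i` on the homogeneous elements of degree `i`. -/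
def homogeneousLift (φ : ι → M →ₗ[k] Y) : M →ₗ[k] Y :=
  DirectSum.toModule k ι Y (fun i ↦ φ i ∘ₗ (ℳ i).subtype) ∘ₗ
    (DirectSum.decomposeLinearEquiv ℳ).toLinearMap

theorem homogeneousLift_of_mem (φ : ι → M →ₗ[k] Y) {i : ι} {m : M} (hm : m ∈ ℳ i) :
    homogeneousLift ℳ φ m = φ i m := by
  lift m to ℳ i using hm
  simp [homogeneousLift]

/-- The bilinear map which agrees with `φ i j` on pairs of homogeneous elements of degrees `i`
and `j`. -/
def homogeneousLift₂ (φ : ι → κ → M →ₗ[k] N →ₗ[k] Y) : M →ₗ[k] N →ₗ[k] Y :=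
  homogeneousLift ℳ fun i ↦ (homogeneousLift 𝒩 fun j ↦ (φ i j).flip).flip

theorem homogeneousLift₂_of_mem (φ : ι → κ → M →ₗ[k] N →ₗ[k] Y) {i : ι} {j : κ} {m : M} {n : N}
    (hm : m ∈ ℳ i) (hn : n ∈ 𝒩 j) : homogeneousLift₂ ℳ 𝒩 φ m n = φ i j m n := by
  simp [homogeneousLift₂, homogeneousLift_of_mem ℳ _ hm, homogeneousLift_of_mem 𝒩 _ hn]

end HomogeneousLift

section TwistedAlgebra

/-- A homomorphism `A ⊗_ℤ B → G`, encoded as a function of two variables that is multiplicative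
in each of them. -/
structure IsBicharacter {A B G : Type*} [Add A] [Add B] [Mul G] (t : A → B → G) : Prop where
  map_add_left : ∀ a a' b, t (a + a') b = t a b * t a' b
  map_add_right : ∀ a b b', t a (b + b') = t a b * t a b'

namespace IsBicharacter

variable {A B G : Type*} [AddMonoid A] [AddMonoid B] [Group G] {t : A → B → G}

theorem map_zero_left (ht : IsBicharacter t) (b : B) : t 0 b = 1 := by
  simpa using ht.map_add_left 0 0 b

theorem map_zero_right (ht : IsBicharacter t) (a : A) : t a 0 = 1 := by
  simpa using ht.map_add_right a 0 0

end IsBicharacter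

variable {k A B Λ Γ T : Type*} [CommRing k] [AddMonoid A] [AddMonoid B]
  [DecidableEq A] [DecidableEq B] [Ring Λ] [Algebra k Λ] [Ring Γ] [Algebra k Γ]
  [Ring T] [Algebra k T]

/-- The `k`-linear isomorphism `e` exhibits `T` as the twisted tensor product algebra `Λ ⊗ᵗ Γ`. -/
structure IsTwistedTensorAlgebra (𝒜 : A → Submodule k Λ) (ℬ : B → Submodule k Γ)
    (t : A → B → kˣ) (e : (Λ ⊗[k] Γ) ≃ₗ[k] T) : Prop where
  isBicharacter : IsBicharacter t
  map_one : e (1 ⊗ₜ 1) = 1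
  map_mul : ∀ {a b} (x x' : Λ) (y y' : Γ), x' ∈ 𝒜 a → y ∈ ℬ b →
    e (x ⊗ₜ y) * e (x' ⊗ₜ y') = (t a b : k) • e ((x * x') ⊗ₜ (y * y'))

namespace IsTwistedTensorAlgebra

variable {𝒜 : A → Submodule k Λ} {ℬ : B → Submodule k Γ} [GradedAlgebra 𝒜] [GradedAlgebra ℬ]
  {t : A → B → kˣ} {e : (Λ ⊗[k] Γ) ≃ₗ[k] T}

theorem tmul_mul_one_tmul (hT : IsTwistedTensorAlgebra 𝒜 ℬ t e) (x : Λ) (y y' : Γ) :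
    e (x ⊗ₜ y) * e (1 ⊗ₜ y') = e (x ⊗ₜ (y * y')) := by
  induction y using DirectSum.Decomposition.inductionOn ℬ with
  | zero => simp
  | add y₁ y₂ h₁ h₂ => simp only [tmul_add, map_add, add_mul, h₁, h₂]
  | homogeneous y =>
    simp [hT.map_mul x 1 _ y' SetLike.GradedOne.one_mem y.2, hT.isBicharacter.map_zero_left]

theorem tmul_one_mul_tmul (hT : IsTwistedTensorAlgebra 𝒜 ℬ t e) (x x' : Λ) (y' : Γ) :
    e (x ⊗ₜ 1) * e (x' ⊗ₜ y') = e ((x * x') ⊗ₜ y') := by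
  induction x' using DirectSum.Decomposition.inductionOn 𝒜 with
  | zero => simp
  | add x₁ x₂ h₁ h₂ => simp only [mul_add, add_tmul, map_add, h₁, h₂]
  | homogeneous x' =>
    simp [hT.map_mul x _ 1 y' x'.2 SetLike.GradedOne.one_mem, hT.isBicharacter.map_zero_right]

/-- The algebra homomorphism `Λ → Λ ⊗ᵗ Γ`, `x ↦ x ⊗ 1`. -/
def includeLeft (hT : IsTwistedTensorAlgebra 𝒜 ℬ t e) : Λ →ₐ[k] T :=
  AlgHom.ofLinearMap (e.toLinearMap ∘ₗ (TensorProduct.mk k Λ Γ).flip 1) hT.map_one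
    fun x x' ↦ (hT.tmul_one_mul_tmul x x' 1).symm

end IsTwistedTensorAlgebra

end TwistedAlgebra

section TwistedAction

variable {k A B Λ Γ T P Q P' Q' : Type*} [CommRing k] [DecidableEq A] [DecidableEq B]
  [Ring Λ] [Algebra k Λ] [Ring Γ] [Algebra k Γ] [Ring T] [Algebra k T]
  [AddCommGroup P] [Module k P] [AddCommGroup Q] [Module k Q]
  [AddCommGroup P'] [Module k P'] [AddCommGroup Q'] [Module k Q']
  (ℬ : B → Submodule k Γ) (t : A → B → kˣ) (e : (Λ ⊗[k] Γ) ≃ₗ[k] T)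
  (𝓟 : A → Submodule k P) {𝓟' : A → Submodule k P'}

theorem map_smul_of_homogeneous [DirectSum.Decomposition ℬ] [DirectSum.Decomposition 𝓟]
    [Module T (P ⊗[k] Q)] {Y : Type*} [AddCommGroup Y] [Module k Y] [Module T Y]
    (φ : P ⊗[k] Q →ₗ[k] Y)
    (hφ : ∀ (a : A) (b : B) (l : Λ) (g : Γ) (p : P) (q : Q), g ∈ ℬ b → p ∈ 𝓟 a →
      φ (e (l ⊗ₜ g) • (p ⊗ₜ q)) = e (l ⊗ₜ g) • φ (p ⊗ₜ q)) (s : T) (x : P ⊗[k] Q) :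
    φ (s • x) = s • φ x := by
  obtain ⟨z, rfl⟩ := e.surjective s
  induction z with
  | zero => simp
  | add z w hz hw => simp only [map_add, add_smul, hz, hw]
  | tmul l g =>
    induction g using DirectSum.Decomposition.inductionOn ℬ with
    | zero => simp
    | add g g' hg hg' => simp only [tmul_add, map_add, add_smul, hg, hg']
    | @homogeneous b g =>
      induction x with
      | zero => simp
      | add z w hz hw => simp only [map_add, smul_add, hz, hw]
      | tmul p q =>
        induction p using DirectSum.Decomposition.inductionOn 𝓟 with
        | zero => simp
        | add p p' hp hp' => simp only [add_tmul, map_add, smul_add, hp, hp']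
        | @homogeneous a p => exact hφ a b l g p q g.2 p.2

variable [Module Λ P] [Module Γ Q] [Module Λ P'] [Module Γ Q']

variable (Q) in
/-- The `T`-module structure on `P ⊗ Q` is the twisted one, that of `P ⊗ᵗ Q`. -/
def IsTwistedAction [Module T (P ⊗[k] Q)] : Prop :=
  ∀ (a : A) (b : B) (l : Λ) (g : Γ) (p : P) (q : Q), g ∈ ℬ b → p ∈ 𝓟 a →
    e (l ⊗ₜ g) • (p ⊗ₜ q : P ⊗[k] Q) = (t a b : k) • ((l • p) ⊗ₜ (g • q))

variable {ℬ t e 𝓟}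

/-- The `T`-linear map `f ⊗ g` between twisted tensor products. -/
def IsTwistedAction.map [IsScalarTower k Λ P] [IsScalarTower k Γ Q] [IsScalarTower k Λ P']
    [IsScalarTower k Γ Q'] [DirectSum.Decomposition ℬ] [DirectSum.Decomposition 𝓟]
    [Module T (P ⊗[k] Q)] [Module T (P' ⊗[k] Q')]
    (h : IsTwistedAction Q ℬ t e 𝓟) (h' : IsTwistedAction Q' ℬ t e 𝓟')
    (f : P →ₗ[Λ] P') (hf : ∀ a, ∀ p ∈ 𝓟 a, f p ∈ 𝓟' a) (g : Q →ₗ[Γ] Q') :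
    P ⊗[k] Q →ₗ[T] P' ⊗[k] Q' where
  __ := TensorProduct.map (f.restrictScalars k) (g.restrictScalars k)
  map_smul' := map_smul_of_homogeneous ℬ e 𝓟 _ fun a b l c p q hc hp ↦ by
    simp [h a b l c p q hc hp, h' a b l c _ _ hc (hf a p hp)]

end TwistedAction

section TwistedExtend

variable {k A B Λ Γ T P Z : Type*} [CommRing k] [DecidableEq A] [DecidableEq B]
  [Ring Λ] [Algebra k Λ] [Ring Γ] [Algebra k Γ] [Ring T] [Algebra k T]
  (ℬ : B → Submodule k Γ) [DirectSum.Decomposition ℬ]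
  (t : A → B → kˣ) (e : (Λ ⊗[k] Γ) ≃ₗ[k] T)
  [AddCommGroup P] [Module k P] (𝓟 : A → Submodule k P) [DirectSum.Decomposition 𝓟]
  [AddCommGroup Z] [Module k Z] [Module T Z] [IsScalarTower k T Z]

/-- The bilinear map `P × Γ → Z` which sends `(p, g)`, with `p` of degree `a` and `g` of degree
`b`, to `t(a, b)⁻¹ (1 ⊗ g) • f p`. For a `Λ`-linear `f` it is the `T`-linear map `P ⊗ᵗ Γ → Z`
induced by `f`. -/
def twistedExtend (f : P →ₗ[k] Z) : P →ₗ[k] Γ →ₗ[k] Z :=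
  homogeneousLift₂ 𝓟 ℬ fun a b ↦ ((t a b)⁻¹ : kˣ).val •
    (((Algebra.lsmul k k Z).toLinearMap ∘ₗ e.toLinearMap ∘ₗ TensorProduct.mk k Λ Γ 1).flip ∘ₗ f)

theorem twistedExtend_of_mem (f : P →ₗ[k] Z) {a : A} {b : B} {p : P} {g : Γ} (hp : p ∈ 𝓟 a)
    (hg : g ∈ ℬ b) :
    twistedExtend ℬ t e 𝓟 f p g = ((t a b)⁻¹ : kˣ).val • e (1 ⊗ₜ g) • f p := by
  simp [twistedExtend, homogeneousLift₂_of_mem 𝓟 ℬ _ hp hg]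

theorem map_twistedExtend {Y : Type*} [AddCommGroup Y] [Module k Y] [Module T Y]
    [IsScalarTower k T Y] (π : Z →ₗ[T] Y) (f : P →ₗ[k] Z) (p : P) (g : Γ) :
    π (twistedExtend ℬ t e 𝓟 f p g) = twistedExtend ℬ t e 𝓟 (π.restrictScalars k ∘ₗ f) p g := by
  induction p using DirectSum.Decomposition.inductionOn 𝓟 with
  | zero => simp
  | add p₁ p₂ h₁ h₂ => simp only [map_add, LinearMap.add_apply, h₁, h₂]
  | homogeneous p =>
    induction g using DirectSum.Decomposition.inductionOn ℬ with
    | zero => simp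
    | add g₁ g₂ h₁ h₂ => simp only [map_add, h₁, h₂]
    | homogeneous g =>
      simp only [twistedExtend_of_mem ℬ t e 𝓟 _ p.2 g.2, LinearMap.map_smul_of_tower, map_smul,
        LinearMap.comp_apply, LinearMap.restrictScalars_apply]

end TwistedExtend

section Projective

variable {k A B Λ Γ T P : Type*} [CommRing k] [AddMonoid A] [AddMonoid B]
  [DecidableEq A] [DecidableEq B] [Ring Λ] [Algebra k Λ] [Ring Γ] [Algebra k Γ]
  [Ring T] [Algebra k T] {𝒜 : A → Submodule k Λ} {ℬ : B → Submodule k Γ} [GradedAlgebra 𝒜]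
  [GradedAlgebra ℬ] {t : A → B → kˣ} {e : (Λ ⊗[k] Γ) ≃ₗ[k] T}
  [AddCommGroup P] [Module k P] [Module Λ P]

namespace IsTwistedTensorAlgebra

theorem smul_twistedExtend {𝓟 : A → Submodule k P} [DirectSum.Decomposition 𝓟] {Z : Type*}
    [AddCommGroup Z] [Module k Z] [Module T Z] [IsScalarTower k T Z]
    (hT : IsTwistedTensorAlgebra 𝒜 ℬ t e)
    (h𝓟 : ∀ {a a'} (l : Λ) (p : P), l ∈ 𝒜 a → p ∈ 𝓟 a' → l • p ∈ 𝓟 (a + a'))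
    {f : P →ₗ[k] Z} (hf : ∀ (l : Λ) (p : P), f (l • p) = e (l ⊗ₜ 1) • f p)
    {a : A} {b : B} (l : Λ) {g : Γ} {p : P} (hg : g ∈ ℬ b) (hp : p ∈ 𝓟 a) (g' : Γ) :
    e (l ⊗ₜ g) • twistedExtend ℬ t e 𝓟 f p g' =
      (t a b : k) • twistedExtend ℬ t e 𝓟 f (l • p) (g * g') := by
  induction g' using DirectSum.Decomposition.inductionOn ℬ with
  | zero => simp
  | add g₁ g₂ h₁ h₂ => simp only [mul_add, map_add, smul_add, h₁, h₂]
  | @homogeneous b' g' =>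
    induction l using DirectSum.Decomposition.inductionOn 𝒜 with
    | zero => simp
    | add l₁ l₂ h₁ h₂ =>
      simp only [add_tmul, map_add, add_smul, smul_add, h₁, h₂, LinearMap.add_apply]
    | @homogeneous c l =>
      have hgg' : g * g' ∈ ℬ (b + b') := SetLike.mul_mem_graded hg g'.2
      have ht : t a b * (t (c + a) (b + b'))⁻¹ * t c (b + b') = (t a b')⁻¹ := by
        rw [hT.isBicharacter.map_add_left, hT.isBicharacter.map_add_right a, mul_inv, mul_inv]
        simp [mul_comm, mul_assoc]
      calc e (l ⊗ₜ g) • twistedExtend ℬ t e 𝓟 f p g'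
          = ((t a b')⁻¹ : kˣ).val • e ((l : Λ) ⊗ₜ (g * g')) • f p := by
            rw [twistedExtend_of_mem ℬ t e 𝓟 f hp g'.2, smul_comm, smul_smul (e _),
              hT.tmul_mul_one_tmul]
        _ = (t a b : k) • ((t (c + a) (b + b'))⁻¹ : kˣ).val •
              (t c (b + b') : k) • e ((l : Λ) ⊗ₜ (g * g')) • f p := by
            rw [smul_smul, smul_smul, ← ht, Units.val_mul, Units.val_mul, mul_assoc]
        _ = (t a b : k) • ((t (c + a) (b + b'))⁻¹ : kˣ).val •
              e (1 ⊗ₜ (g * g')) • e ((l : Λ) ⊗ₜ 1) • f p := by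
            rw [smul_smul (e _), hT.map_mul _ _ _ _ l.2 hgg', one_mul, mul_one, smul_assoc]
        _ = (t a b : k) • twistedExtend ℬ t e 𝓟 f ((l : Λ) • p) (g * g') := by
            rw [twistedExtend_of_mem ℬ t e 𝓟 f (h𝓟 _ p l.2 hp) hgg', hf]

theorem exists_equivariant_lift [IsScalarTower k Λ P] [Module.Projective Λ P] {Y Z : Type*}
    [AddCommGroup Y] [Module k Y] [Module T Y] [AddCommGroup Z] [Module k Z] [Module T Z]
    [IsScalarTower k T Z] [IsScalarTower k T Y] (hT : IsTwistedTensorAlgebra 𝒜 ℬ t e)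
    {π : Z →ₗ[T] Y} (hπ : Function.Surjective π) {f : P →ₗ[k] Y}
    (hf : ∀ (l : Λ) (p : P), f (l • p) = e (l ⊗ₜ 1) • f p) :
    ∃ f' : P →ₗ[k] Z, (∀ (l : Λ) (p : P), f' (l • p) = e (l ⊗ₜ 1) • f' p) ∧
      π.restrictScalars k ∘ₗ f' = f := by
  let := Module.compHom Z hT.includeLeft.toRingHom
  let := Module.compHom Y hT.includeLeft.toRingHom
  have : IsScalarTower k Λ Z := .of_algebraMap_smul fun c z ↦ by
    change hT.includeLeft (algebraMap k Λ c) • z = c • z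
    rw [AlgHom.commutes, algebraMap_smul]
  let πΛ : Z →ₗ[Λ] Y := { π with map_smul' := fun l z ↦ π.map_smul (hT.includeLeft l) z }
  obtain ⟨f', hf'⟩ := Module.projective_lifting_property πΛ { f with map_smul' := hf } hπ
  exact ⟨f'.restrictScalars k, f'.map_smul, LinearMap.ext fun p ↦ LinearMap.congr_fun hf' p⟩

end IsTwistedTensorAlgebra

namespace IsTwistedAction

omit [GradedAlgebra 𝒜]

variable {𝓟 : A → Submodule k P} [DirectSum.Decomposition 𝓟]
  {Q : Type*} [AddCommGroup Q] [Module k Q] [Module Γ Q] [Module T (P ⊗[k] Q)]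

theorem tmul_one_smul_tmul (h : IsTwistedAction Q ℬ t e 𝓟)
    (hT : IsTwistedTensorAlgebra 𝒜 ℬ t e) (l : Λ) (p : P) (q : Q) :
    e (l ⊗ₜ 1) • (p ⊗ₜ[k] q) = (l • p) ⊗ₜ q := by
  induction p using DirectSum.Decomposition.inductionOn 𝓟 with
  | zero => simp
  | add p₁ p₂ h₁ h₂ => simp only [add_tmul, smul_add, h₁, h₂]
  | @homogeneous a p =>
    simp [h a 0 l 1 p q SetLike.GradedOne.one_mem p.2, hT.isBicharacter.map_zero_right]

variable [IsScalarTower k T (P ⊗[k] Q)]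

omit [AddMonoid A] in
theorem twistedExtend_mk_flip (h : IsTwistedAction Q ℬ t e 𝓟) (p : P) (g : Γ) (q : Q) :
    twistedExtend ℬ t e 𝓟 ((TensorProduct.mk k P Q).flip q) p g = p ⊗ₜ (g • q) := by
  induction p using DirectSum.Decomposition.inductionOn 𝓟 with
  | zero => simp
  | add p₁ p₂ h₁ h₂ => simp only [map_add, LinearMap.add_apply, add_tmul, h₁, h₂]
  | @homogeneous a p =>
    induction g using DirectSum.Decomposition.inductionOn ℬ with
    | zero => simp
    | add g₁ g₂ h₁ h₂ => simp only [map_add, add_smul, tmul_add, h₁, h₂]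
    | @homogeneous b g =>
      simp [twistedExtend_of_mem ℬ t e 𝓟 _ p.2 g.2, h a b 1 g p q g.2 p.2, smul_smul]

theorem projective [GradedAlgebra 𝒜] [IsScalarTower k Λ P] [IsScalarTower k Γ Q]
    [Module.Projective Λ P] [Module.Projective Γ Q]
    (h : IsTwistedAction Q ℬ t e 𝓟) (hT : IsTwistedTensorAlgebra 𝒜 ℬ t e)
    (h𝓟 : ∀ {a a'} (l : Λ) (p : P), l ∈ 𝒜 a → p ∈ 𝓟 a' → l • p ∈ 𝓟 (a + a')) :
    Module.Projective T (P ⊗[k] Q) := by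
  obtain ⟨u, hu⟩ := (Module.projective_def' (R := Γ) (P := Q)).mp inferInstance
  refine .of_lifting_property'' fun π hπ ↦ ?_
  choose f hf hπf using fun y : Q ↦ hT.exists_equivariant_lift hπ
    (f := (TensorProduct.mk k P Q).flip y) fun l p ↦ (h.tmul_one_smul_tmul hT l p y).symm
  let G : (Q →₀ Γ) →ₗ[k] P →ₗ[k] (P ⊗[k] Q →₀ T) :=
    Finsupp.lsum k fun y ↦ (twistedExtend ℬ t e 𝓟 (f y)).flip
  have smul_G {a b} (l : Λ) {g : Γ} {p : P} (hg : g ∈ ℬ b) (hp : p ∈ 𝓟 a) (w : Q →₀ Γ) :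
      e (l ⊗ₜ g) • G w p = (t a b : k) • G (g • w) (l • p) := by
    induction w using Finsupp.induction_linear with
    | zero => simp
    | add w₁ w₂ h₁ h₂ => simp only [map_add, smul_add, LinearMap.add_apply, h₁, h₂]
    | single y g' =>
      simpa only [G, Finsupp.smul_single, Finsupp.lsum_single, LinearMap.flip_apply,
        smul_eq_mul] using hT.smul_twistedExtend h𝓟 (hf y) l hg hp g'
  have map_G (w : Q →₀ Γ) (p : P) : π (G w p) = p ⊗ₜ Finsupp.linearCombination Γ id w := by
    induction w using Finsupp.induction_linear with
    | zero => simp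
    | add w₁ w₂ h₁ h₂ => simp only [map_add, LinearMap.add_apply, tmul_add, h₁, h₂]
    | single y g => simp [G, map_twistedExtend, hπf, h.twistedExtend_mk_flip]
  let S : P ⊗[k] Q →ₗ[T] (P ⊗[k] Q →₀ T) :=
    { TensorProduct.lift (G ∘ₗ u.restrictScalars k).flip with
      map_smul' := map_smul_of_homogeneous ℬ e 𝓟 _ fun a b l g p q hg hp ↦ by
        simp [h a b l g p q hg hp, smul_G l hg hp] }
  refine ⟨S, LinearMap.ext fun x ↦ ?_⟩
  induction x with
  | zero => simp
  | add x y hx hy => simp only [map_add, hx, hy]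
  | tmul p q => exact (map_G (u q) p).trans (congrArg (p ⊗ₜ ·) (LinearMap.congr_fun hu q))

end IsTwistedAction

end Projective

section Contraction

/-- Exactness of the augmented complex `⋯ → X 1 → X 0 → M → 0`. -/
structure IsResolution {R M : Type*} [Ring R] [AddCommGroup M] [Module R M] {X : ℕ → Type*}
    [∀ i, AddCommGroup (X i)] [∀ i, Module R (X i)] (d : ∀ i, X (i + 1) →ₗ[R] X i)
    (ε : X 0 →ₗ[R] M) : Prop where
  surjective : Function.Surjective ε
  ker_augmentation : LinearMap.ker ε = LinearMap.range (d 0)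
  ker_differential : ∀ i, LinearMap.ker (d i) = LinearMap.range (d (i + 1))

namespace IsResolution

variable {k R M : Type*} [Ring k] [Ring R] [AddCommGroup M] [Module R M] {X : ℕ → Type*}
  [∀ i, AddCommGroup (X i)] [∀ i, Module R (X i)] {d : ∀ i, X (i + 1) →ₗ[R] X i}
  {ε : X 0 →ₗ[R] M}

theorem augmentation_apply_differential (h : IsResolution d ε) (x : X 1) : ε (d 0 x) = 0 :=
  LinearMap.mem_ker.mp (h.ker_augmentation.ge ⟨x, rfl⟩)

theorem differential_apply_differential (h : IsResolution d ε) (i : ℕ) (x : X (i + 2)) :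
    d i (d (i + 1) x) = 0 :=
  LinearMap.mem_ker.mp ((h.ker_differential i).ge ⟨x, rfl⟩)

theorem of_coe_eq [Module k M] [∀ i, Module k (X i)] (h : IsResolution d ε)
    {d' : ∀ i, X (i + 1) →ₗ[k] X i} {ε' : X 0 →ₗ[k] M} (hd : ∀ i, ⇑(d' i) = d i) (hε : ⇑ε' = ε) :
    IsResolution d' ε' where
  surjective := hε ▸ h.surjective
  ker_augmentation := by
    ext x
    simpa [hd, hε] using SetLike.ext_iff.mp h.ker_augmentation x
  ker_differential i := by
    ext x
    simpa [hd] using SetLike.ext_iff.mp (h.ker_differential i) x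

end IsResolution

/-- A contracting homotopy of the augmented complex `⋯ → X 1 → X 0 → M → 0`; its component
`M → X 0` is called `sectionMap`. -/
structure Contraction {k M : Type*} [Ring k] [AddCommGroup M] [Module k M] {X : ℕ → Type*}
    [∀ i, AddCommGroup (X i)] [∀ i, Module k (X i)] (d : ∀ i, X (i + 1) →ₗ[k] X i)
    (ε : X 0 →ₗ[k] M) where
  sectionMap : M →ₗ[k] X 0
  homotopy : ∀ i, X i →ₗ[k] X (i + 1)
  augmentation_sectionMap : ∀ m, ε (sectionMap m) = m
  homotopy_zero : ∀ x, d 0 (homotopy 0 x) + sectionMap (ε x) = x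
  homotopy_succ : ∀ i x, d (i + 1) (homotopy (i + 1) x) + homotopy i (d i x) = x

variable {k M N : Type*} [Ring k] [AddCommGroup M] [Module k M] [AddCommGroup N] [Module k N]
  {X : ℕ → Type*} [∀ i, AddCommGroup (X i)] [∀ i, Module k (X i)]
  {d : ∀ i, X (i + 1) →ₗ[k] X i} {ε : X 0 →ₗ[k] M}

theorem Contraction.isResolution (c : Contraction d ε) (hε : ε ∘ₗ d 0 = 0)
    (hd : ∀ i, d i ∘ₗ d (i + 1) = 0) : IsResolution d ε where
  surjective m := ⟨_, c.augmentation_sectionMap m⟩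
  ker_augmentation := le_antisymm
    (fun x hx ↦ ⟨c.homotopy 0 x, by simpa [LinearMap.mem_ker.mp hx] using c.homotopy_zero x⟩)
    (LinearMap.range_le_ker_iff.mpr hε)
  ker_differential i := le_antisymm
    (fun x hx ↦ ⟨c.homotopy (i + 1) x, by
      simpa [LinearMap.mem_ker.mp hx] using c.homotopy_succ i x⟩)
    (LinearMap.range_le_ker_iff.mpr (hd i))

theorem exists_generalizedInverse [IsSemisimpleRing k] (f : M →ₗ[k] N) :
    ∃ r : N →ₗ[k] M, f ∘ₗ r ∘ₗ f = f := by
  obtain ⟨ρ, hρ⟩ := IsSemisimpleModule.lifting_property f.rangeRestrict f.surjective_rangeRestrict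
    LinearMap.id
  obtain ⟨r, hr⟩ := IsSemisimpleModule.extension_property f.range.subtype
    f.range.subtype_injective ρ
  refine ⟨r, LinearMap.ext fun x ↦ ?_⟩
  have hrx : r (f x) = ρ (f.rangeRestrict x) := LinearMap.congr_fun hr (f.rangeRestrict x)
  simpa [hrx] using congrArg Subtype.val (LinearMap.congr_fun hρ (f.rangeRestrict x))

theorem IsResolution.nonempty_contraction [IsSemisimpleRing k] (h : IsResolution d ε) :
    Nonempty (Contraction d ε) := by
  choose r hr using fun i ↦ exists_generalizedInverse (d i)
  obtain ⟨σ, hσ⟩ := exists_generalizedInverse ε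
  have d_r {i : ℕ} {x : X i} (hx : x ∈ LinearMap.range (d i)) : d i (r i x) = x := by
    obtain ⟨y, rfl⟩ := hx
    exact LinearMap.congr_fun (hr i) y
  have ε_σ (m : M) : ε (σ m) = m := by
    obtain ⟨x, rfl⟩ := h.surjective m
    exact LinearMap.congr_fun hσ x
  have d_r_zero (x : X 0) : d 0 (r 0 (x - σ (ε x))) = x - σ (ε x) := d_r <| by
    simp [← h.ker_augmentation, ε_σ]
  have d_r_succ (i : ℕ) (x : X (i + 1)) :
      d (i + 1) (r (i + 1) (x - r i (d i x))) = x - r i (d i x) := d_r <| by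
    simp [← h.ker_differential, d_r ⟨x, rfl⟩]
  exact ⟨{
    sectionMap := σ
    homotopy
      | 0 => r 0 ∘ₗ (LinearMap.id - σ ∘ₗ ε)
      | i + 1 => r (i + 1) ∘ₗ (LinearMap.id - r i ∘ₗ d i)
    augmentation_sectionMap := ε_σ
    homotopy_zero x := by simp [-map_sub, d_r_zero]
    homotopy_succ
      | 0, x => by simp [-map_sub, d_r_succ, h.augmentation_apply_differential]
      | i + 1, x => by simp [-map_sub, d_r_succ, h.differential_apply_differential] }⟩

end Contraction

section TotalComplex

/-- The term of degree `n` of the total complex of a double complex `X`. -/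
abbrev TotalSum (X : ℕ → ℕ → Type*) [∀ i j, AddCommGroup (X i j)] (n : ℕ) : Type _ :=
  ⨁ p : {p : ℕ × ℕ // p.1 + p.2 = n}, X p.1.1 p.1.2

variable {R : Type*} [Ring R] {X : ℕ → ℕ → Type*} [∀ i j, AddCommGroup (X i j)]
  [∀ i j, Module R (X i j)] {Y : Type*} [AddCommGroup Y] [Module R Y]

namespace TotalSum

variable (X) in
/-- The inclusion of a term of bidegree `(i, j)` into the total complex. -/
def inc {i j n : ℕ} (h : i + j = n) : X i j →+ TotalSum X n :=
  DirectSum.of (fun p : {p : ℕ × ℕ // p.1 + p.2 = n} ↦ X p.1.1 p.1.2) ⟨(i, j), h⟩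

variable (R X) in
/-- The linear version of `TotalSum.inc`. -/
def linearInc {i j n : ℕ} (h : i + j = n) : X i j →ₗ[R] TotalSum X n :=
  DirectSum.lof R _ (fun p : {p : ℕ × ℕ // p.1 + p.2 = n} ↦ X p.1.1 p.1.2) ⟨(i, j), h⟩

@[simp]
theorem linearInc_apply {i j n : ℕ} (h : i + j = n) (x : X i j) :
    linearInc R X h x = inc X h x := rfl

theorem linearMap_ext {n : ℕ} {f g : TotalSum X n →ₗ[R] Y}
    (hfg : ∀ i j (h : i + j = n) (x : X i j), f (inc X h x) = g (inc X h x)) : f = g :=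
  DirectSum.linearMap_ext R fun ⟨(i, j), h⟩ ↦ LinearMap.ext (hfg i j h)

/-- The linear map out of the total complex with components `φ`. -/
def lift {n : ℕ} (φ : ∀ i j, i + j = n → X i j →ₗ[R] Y) : TotalSum X n →ₗ[R] Y :=
  DirectSum.toModule R _ Y fun p ↦ φ p.1.1 p.1.2 p.2

theorem lift_inc {i j n : ℕ} (φ : ∀ i j, i + j = n → X i j →ₗ[R] Y) (h : i + j = n) (x : X i j) :
    lift φ (inc X h x) = φ i j h x :=
  DirectSum.toModule_lof R _ _

end TotalSum

open TotalSum

/-- The part of the total differential that lowers the first degree. -/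
def horizontal (d₁ : ∀ i j, X (i + 1) j →ₗ[R] X i j) (n : ℕ) :
    TotalSum X (n + 1) →ₗ[R] TotalSum X n :=
  lift fun
    | 0, _, _ => 0
    | i + 1, j, h => linearInc R X (show i + j = n by omega) ∘ₗ d₁ i j

/-- The part of the total differential that lowers the second degree, with the sign `(-1) ^ i` on
the `i`-th column. -/
def vertical (d₂ : ∀ i j, X i (j + 1) →ₗ[R] X i j) (n : ℕ) :
    TotalSum X (n + 1) →ₗ[R] TotalSum X n :=
  lift fun
    | _, 0, _ => 0
    | i, j + 1, h => (-1 : ℤ) ^ i • linearInc R X (show i + j = n by omega) ∘ₗ d₂ i j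

/-- The differential of the total complex of the double complex with horizontal differential `d₁`
and vertical differential `d₂`. -/
def totalDifferential (d₁ : ∀ i j, X (i + 1) j →ₗ[R] X i j) (d₂ : ∀ i j, X i (j + 1) →ₗ[R] X i j)
    (n : ℕ) : TotalSum X (n + 1) →ₗ[R] TotalSum X n :=
  horizontal d₁ n + vertical d₂ n

/-- The augmentation of the total complex induced by `ε` on bidegree `(0, 0)`. -/
def totalAugmentation (ε : X 0 0 →ₗ[R] Y) : TotalSum X 0 →ₗ[R] Y :=
  lift fun
    | 0, 0, _ => ε
    | _, _, _ => 0

variable {d₁ : ∀ i j, X (i + 1) j →ₗ[R] X i j} {d₂ : ∀ i j, X i (j + 1) →ₗ[R] X i j}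

section Components

variable {i j n : ℕ}

@[simp]
theorem horizontal_inc_zero (h : 0 + j = n + 1) (x : X 0 j) :
    horizontal d₁ n (inc X h x) = 0 :=
  lift_inc _ h x

@[simp]
theorem horizontal_inc_succ (h : i + 1 + j = n + 1) (x : X (i + 1) j) :
    horizontal d₁ n (inc X h x) = inc X (by omega) (d₁ i j x) :=
  lift_inc _ h x

@[simp]
theorem vertical_inc_zero (h : i + 0 = n + 1) (x : X i 0) : vertical d₂ n (inc X h x) = 0 :=
  (lift_inc _ h x).trans (by cases i <;> rfl)

@[simp]
theorem vertical_inc_succ (h : i + (j + 1) = n + 1) (x : X i (j + 1)) :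
    vertical d₂ n (inc X h x) = (-1 : ℤ) ^ i • inc X (by omega) (d₂ i j x) :=
  (lift_inc _ h x).trans (by cases i <;> rfl)

@[simp]
theorem totalAugmentation_inc (ε : X 0 0 →ₗ[R] Y) (h : 0 + 0 = 0) (x : X 0 0) :
    totalAugmentation ε (inc X h x) = ε x :=
  lift_inc _ h x

theorem totalDifferential_inc_succ_succ (h : (i + 1) + (j + 1) = n + 1) (x : X (i + 1) (j + 1)) :
    totalDifferential d₁ d₂ n (inc X h x) =
      inc X (by omega) (d₁ i (j + 1) x) +
        (-1 : ℤ) ^ (i + 1) • inc X (by omega) (d₂ (i + 1) j x) := by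
  simp [totalDifferential]

theorem totalDifferential_inc_zero_succ (h : 0 + (j + 1) = n + 1) (x : X 0 (j + 1)) :
    totalDifferential d₁ d₂ n (inc X h x) = inc X (by omega) (d₂ 0 j x) := by
  simp [totalDifferential]

theorem totalDifferential_inc_succ_zero (h : (i + 1) + 0 = n + 1) (x : X (i + 1) 0) :
    totalDifferential d₁ d₂ n (inc X h x) = inc X (by omega) (d₁ i 0 x) := by
  simp [totalDifferential]

end Components

theorem horizontal_comp_horizontal (hd₁ : ∀ i j x, d₁ i j (d₁ (i + 1) j x) = 0) (n : ℕ) :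
    horizontal d₁ n ∘ₗ horizontal d₁ (n + 1) = 0 := by
  refine TotalSum.linearMap_ext ?_
  rintro (_ | _ | i) j h x <;> simp [hd₁]

theorem vertical_comp_vertical (hd₂ : ∀ i j x, d₂ i j (d₂ i (j + 1) x) = 0) (n : ℕ) :
    vertical d₂ n ∘ₗ vertical d₂ (n + 1) = 0 := by
  refine TotalSum.linearMap_ext ?_
  rintro i (_ | _ | j) h x <;> simp [hd₂]

theorem horizontal_comp_vertical
    (hd : ∀ i j x, d₁ i j (d₂ (i + 1) j x) = d₂ i j (d₁ i (j + 1) x)) (n : ℕ) :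
    horizontal d₁ n ∘ₗ vertical d₂ (n + 1) = -(vertical d₂ n ∘ₗ horizontal d₁ (n + 1)) := by
  refine TotalSum.linearMap_ext ?_
  rintro (_ | i) (_ | j) h x <;> simp [hd, pow_succ]

theorem totalDifferential_comp_totalDifferential (hd₁ : ∀ i j x, d₁ i j (d₁ (i + 1) j x) = 0)
    (hd₂ : ∀ i j x, d₂ i j (d₂ i (j + 1) x) = 0)
    (hd : ∀ i j x, d₁ i j (d₂ (i + 1) j x) = d₂ i j (d₁ i (j + 1) x)) (n : ℕ) :
    totalDifferential d₁ d₂ n ∘ₗ totalDifferential d₁ d₂ (n + 1) = 0 := by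
  simp [totalDifferential, LinearMap.add_comp, LinearMap.comp_add, horizontal_comp_horizontal hd₁,
    vertical_comp_vertical hd₂, horizontal_comp_vertical hd]

theorem totalAugmentation_comp_totalDifferential {ε : X 0 0 →ₗ[R] Y}
    (hε₁ : ∀ x, ε (d₁ 0 0 x) = 0) (hε₂ : ∀ x, ε (d₂ 0 0 x) = 0) :
    totalAugmentation ε ∘ₗ totalDifferential d₁ d₂ 0 = 0 := by
  refine TotalSum.linearMap_ext fun i j h x ↦ ?_
  obtain ⟨rfl, rfl⟩ | ⟨rfl, rfl⟩ : i = 1 ∧ j = 0 ∨ i = 0 ∧ j = 1 := by omega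
  · simp [totalDifferential_inc_succ_zero, hε₁]
  · simp [totalDifferential_inc_zero_succ, hε₂]

section ChangeOfRings

variable {S : Type*} [Ring S] [∀ i j, Module S (X i j)] [Module S Y]

theorem TotalSum.coe_lift_congr {n : ℕ} {φ : ∀ i j, i + j = n → X i j →ₗ[R] Y}
    {ψ : ∀ i j, i + j = n → X i j →ₗ[S] Y} (h : ∀ i j hn, ⇑(φ i j hn) = ψ i j hn) :
    ⇑(lift φ) = lift ψ := by
  funext x
  induction x using DirectSum.induction_on with
  | zero => simp
  | of p x =>
    exact (lift_inc φ p.2 x).trans ((congrFun (h _ _ p.2) x).trans (lift_inc ψ p.2 x).symm)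
  | add x y hx hy => simp only [map_add, hx, hy]

theorem coe_totalAugmentation_congr {ε : X 0 0 →ₗ[R] Y} {ε' : X 0 0 →ₗ[S] Y} (h : ⇑ε = ε') :
    ⇑(totalAugmentation ε) = totalAugmentation ε' :=
  TotalSum.coe_lift_congr fun
    | 0, 0, _ => h
    | 0, _ + 1, _ => rfl
    | _ + 1, _, _ => rfl

theorem coe_totalDifferential_congr {d₁' : ∀ i j, X (i + 1) j →ₗ[S] X i j}
    {d₂' : ∀ i j, X i (j + 1) →ₗ[S] X i j} (h₁ : ∀ i j, ⇑(d₁ i j) = d₁' i j)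
    (h₂ : ∀ i j, ⇑(d₂ i j) = d₂' i j) (n : ℕ) :
    ⇑(totalDifferential d₁ d₂ n) = totalDifferential d₁' d₂' n := by
  have horizontal_eq : ⇑(horizontal d₁ n) = horizontal d₁' n := coe_lift_congr fun
    | 0, _, _ => rfl
    | i + 1, j, _ => funext fun x ↦ congrArg (inc X _) (congrFun (h₁ i j) x)
  have vertical_eq : ⇑(vertical d₂ n) = vertical d₂' n := coe_lift_congr fun
    | 0, 0, _ => rfl
    | _ + 1, 0, _ => rfl
    | 0, j + 1, _ => funext fun x ↦
        congrArg ((-1 : ℤ) ^ 0 • inc X _ ·) (congrFun (h₂ 0 j) x)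
    | i + 1, j + 1, _ => funext fun x ↦
        congrArg ((-1 : ℤ) ^ (i + 1) • inc X _ ·) (congrFun (h₂ (i + 1) j) x)
  exact congrArg₂ (· + ·) horizontal_eq vertical_eq

end ChangeOfRings

end TotalComplex

section TensorContraction

/-- The double complex `P_• ⊗ Q_•`. -/
abbrev TensorTerm (k : Type*) [CommRing k] (P Q : ℕ → Type*) [∀ i, AddCommGroup (P i)]
    [∀ i, Module k (P i)] [∀ j, AddCommGroup (Q j)] [∀ j, Module k (Q j)] (i j : ℕ) : Type _ :=
  P i ⊗[k] Q j

variable {k M N : Type*} [CommRing k] [AddCommGroup M] [Module k M] [AddCommGroup N] [Module k N]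
  {P Q : ℕ → Type*} [∀ i, AddCommGroup (P i)] [∀ i, Module k (P i)]
  [∀ j, AddCommGroup (Q j)] [∀ j, Module k (Q j)]
  {dP : ∀ i, P (i + 1) →ₗ[k] P i} {εP : P 0 →ₗ[k] M}
  {dQ : ∀ j, Q (j + 1) →ₗ[k] Q j} {εQ : Q 0 →ₗ[k] N}

open TotalSum

theorem TotalSum.tensor_ext {Y : Type*} [AddCommGroup Y] [Module k Y] {n : ℕ}
    {f g : TotalSum (TensorTerm k P Q) n →ₗ[k] Y}
    (hfg : ∀ i j (h : i + j = n) (p : P i) (q : Q j),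
      f (inc (TensorTerm k P Q) h (p ⊗ₜ q)) =
        g (inc (TensorTerm k P Q) h (p ⊗ₜ q))) : f = g :=
  linearMap_ext fun i j h ↦ LinearMap.congr_fun <| TensorProduct.ext'
    (g := f ∘ₗ linearInc k (TensorTerm k P Q) h)
    (h := g ∘ₗ linearInc k (TensorTerm k P Q) h) (hfg i j h)

namespace Contraction

/-- The homotopy `s ⊗ 1` of the total complex. -/
def rowHomotopy (c : Contraction dP εP) (n : ℕ) :
    TotalSum (TensorTerm k P Q) n →ₗ[k] TotalSum (TensorTerm k P Q) (n + 1) :=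
  lift fun i j h ↦ linearInc k (TensorTerm k P Q) (show i + 1 + j = n + 1 by omega) ∘ₗ
    (c.homotopy i).rTensor (Q j)

/-- The homotopy `σ ε ⊗ s'` of the total complex, supported on the column `i = 0`. -/
def columnHomotopy (c : Contraction dP εP) (c' : Contraction dQ εQ)
    (n : ℕ) :
    TotalSum (TensorTerm k P Q) n →ₗ[k] TotalSum (TensorTerm k P Q) (n + 1) :=
  lift fun
    | 0, j, h => linearInc k (TensorTerm k P Q) (show 0 + (j + 1) = n + 1 by omega) ∘ₗ
        TensorProduct.map (c.sectionMap ∘ₗ εP) (c'.homotopy j)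
    | _ + 1, _, _ => 0

/-- The projection `σ ε ⊗ 1` of the total complex onto the column `i = 0`. -/
def columnProjection (c : Contraction dP εP) (n : ℕ) :
    TotalSum (TensorTerm k P Q) n →ₗ[k] TotalSum (TensorTerm k P Q) n :=
  lift fun
    | 0, j, h => linearInc k (TensorTerm k P Q) h ∘ₗ
        (c.sectionMap ∘ₗ εP).rTensor (Q j)
    | _ + 1, _, _ => 0

variable {c : Contraction dP εP} {c' : Contraction dQ εQ}

section Components

variable {i j n : ℕ}

@[simp]
theorem rowHomotopy_inc (h : i + j = n) (p : P i) (q : Q j) :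
    c.rowHomotopy n (inc (TensorTerm k P Q) h (p ⊗ₜ q)) =
      inc (TensorTerm k P Q) (by omega) (c.homotopy i p ⊗ₜ q) :=
  lift_inc _ h _

@[simp]
theorem columnHomotopy_inc_zero (h : 0 + j = n) (p : P 0) (q : Q j) :
    c.columnHomotopy c' n (inc (TensorTerm k P Q) h (p ⊗ₜ q)) =
      inc (TensorTerm k P Q) (show 0 + (j + 1) = n + 1 by omega)
        (c.sectionMap (εP p) ⊗ₜ c'.homotopy j q) :=
  lift_inc _ h _

@[simp]
theorem columnHomotopy_inc_succ (h : i + 1 + j = n) (x : P (i + 1) ⊗[k] Q j) :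
    c.columnHomotopy c' n (inc (TensorTerm k P Q) h x) = 0 :=
  lift_inc (X := TensorTerm k P Q) _ h x

@[simp]
theorem columnProjection_inc_zero (h : 0 + j = n) (p : P 0) (q : Q j) :
    c.columnProjection n (inc (TensorTerm k P Q) h (p ⊗ₜ q)) =
      inc (TensorTerm k P Q) h (c.sectionMap (εP p) ⊗ₜ q) :=
  lift_inc _ h _

@[simp]
theorem columnProjection_inc_succ (h : i + 1 + j = n) (x : P (i + 1) ⊗[k] Q j) :
    c.columnProjection n (inc (TensorTerm k P Q) h x) = 0 :=
  lift_inc (X := TensorTerm k P Q) _ h x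

end Components

variable (c c')

theorem horizontal_rowHomotopy (n : ℕ) :
    horizontal (fun i j ↦ (dP i).rTensor (Q j)) (n + 1) ∘ₗ c.rowHomotopy (n + 1) +
      c.rowHomotopy n ∘ₗ horizontal (fun i j ↦ (dP i).rTensor (Q j)) n +
        c.columnProjection (n + 1) = LinearMap.id := by
  refine tensor_ext ?_
  rintro (_ | i) j h p q
  · simp [← map_add, ← add_tmul, c.homotopy_zero]
  · simp [← map_add, ← add_tmul, c.homotopy_succ]

theorem vertical_rowHomotopy (n : ℕ) :
    vertical (fun i j ↦ (dQ j).lTensor (P i)) (n + 1) ∘ₗ c.rowHomotopy (n + 1) +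
      c.rowHomotopy n ∘ₗ vertical (fun i j ↦ (dQ j).lTensor (P i)) n = 0 := by
  refine tensor_ext ?_
  rintro i (_ | j) h p q <;> simp [pow_succ]

theorem horizontal_columnHomotopy (n : ℕ) :
    horizontal (fun i j ↦ (dP i).rTensor (Q j)) n ∘ₗ c.columnHomotopy c' n = 0 := by
  refine tensor_ext ?_
  rintro (_ | i) j h p q <;> simp

theorem columnHomotopy_horizontal (hεP : ∀ p, εP (dP 0 p) = 0) (n : ℕ) :
    c.columnHomotopy c' n ∘ₗ horizontal (fun i j ↦ (dP i).rTensor (Q j)) n = 0 := by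
  refine tensor_ext ?_
  rintro (_ | _ | i) j h p q <;> simp [hεP]

theorem vertical_columnHomotopy (n : ℕ) :
    vertical (fun i j ↦ (dQ j).lTensor (P i)) (n + 1) ∘ₗ c.columnHomotopy c' (n + 1) +
      c.columnHomotopy c' n ∘ₗ vertical (fun i j ↦ (dQ j).lTensor (P i)) n =
        c.columnProjection (n + 1) := by
  refine tensor_ext ?_
  rintro (_ | i) (_ | j) h p q
  · omega
  · simp [← map_add, ← tmul_add, c'.homotopy_succ]
  · simp
  · simp

theorem totalDifferential_comp_homotopy_zero :
    totalDifferential (fun i j ↦ (dP i).rTensor (Q j)) (fun i j ↦ (dQ j).lTensor (P i)) 0 ∘ₗ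
        (c.rowHomotopy 0 + c.columnHomotopy c' 0) +
      linearInc k (TensorTerm k P Q) (add_zero 0) ∘ₗ
        TensorProduct.map c.sectionMap c'.sectionMap ∘ₗ
          totalAugmentation (X := TensorTerm k P Q) (TensorProduct.map εP εQ) = LinearMap.id := by
  refine tensor_ext fun i j h p q ↦ ?_
  obtain ⟨rfl, rfl⟩ : i = 0 ∧ j = 0 := by omega
  simp only [LinearMap.add_apply, LinearMap.comp_apply, map_add, rowHomotopy_inc,
    columnHomotopy_inc_zero, totalDifferential_inc_succ_zero, totalDifferential_inc_zero_succ,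
    totalAugmentation_inc, TensorProduct.map_tmul, LinearMap.rTensor_tmul, LinearMap.lTensor_tmul]
  rw [linearInc_apply, add_assoc, ← map_add, ← tmul_add, c'.homotopy_zero, ← map_add, ← add_tmul,
    c.homotopy_zero, LinearMap.id_apply]

theorem totalDifferential_comp_homotopy_succ (hεP : ∀ p, εP (dP 0 p) = 0) (n : ℕ) :
    totalDifferential (fun i j ↦ (dP i).rTensor (Q j)) (fun i j ↦ (dQ j).lTensor (P i)) (n + 1) ∘ₗ
        (c.rowHomotopy (n + 1) + c.columnHomotopy c' (n + 1)) +
      (c.rowHomotopy n + c.columnHomotopy c' n) ∘ₗ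
        totalDifferential (fun i j ↦ (dP i).rTensor (Q j)) (fun i j ↦ (dQ j).lTensor (P i)) n =
      LinearMap.id := by
  simp only [totalDifferential, LinearMap.add_comp, LinearMap.comp_add,
    horizontal_columnHomotopy c c', columnHomotopy_horizontal c c' hεP]
  linear_combination (norm := module) horizontal_rowHomotopy (Q := Q) c n +
    vertical_rowHomotopy (dQ := dQ) c n + vertical_columnHomotopy c c' n

/-- The tensor product of two contractions, with homotopy `s ⊗ 1 + σ ε ⊗ s'`. -/
def tensor (hεP : ∀ p, εP (dP 0 p) = 0) :
    Contraction
      (totalDifferential (fun i j ↦ (dP i).rTensor (Q j)) (fun i j ↦ (dQ j).lTensor (P i)))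
      (totalAugmentation (X := TensorTerm k P Q) (TensorProduct.map εP εQ)) where
  sectionMap := linearInc k (TensorTerm k P Q) (add_zero 0) ∘ₗ
    TensorProduct.map c.sectionMap c'.sectionMap
  homotopy n := c.rowHomotopy n + c.columnHomotopy c' n
  augmentation_sectionMap x := by
    induction x with
    | zero => simp
    | add x y hx hy => simp only [map_add, hx, hy]
    | tmul m n =>
      simp [c.augmentation_sectionMap, c'.augmentation_sectionMap]
  homotopy_zero := LinearMap.congr_fun (totalDifferential_comp_homotopy_zero c c')
  homotopy_succ n := LinearMap.congr_fun (totalDifferential_comp_homotopy_succ c c' hεP n)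

end Contraction

theorem IsResolution.tensor [IsSemisimpleRing k] (hP : IsResolution dP εP)
    (hQ : IsResolution dQ εQ) :
    IsResolution
      (totalDifferential (fun i j ↦ (dP i).rTensor (Q j)) (fun i j ↦ (dQ j).lTensor (P i)))
      (totalAugmentation (X := TensorTerm k P Q) (TensorProduct.map εP εQ)) := by
  obtain ⟨c⟩ := hP.nonempty_contraction
  obtain ⟨c'⟩ := hQ.nonempty_contraction
  have dP_dP (i : ℕ) : dP i ∘ₗ dP (i + 1) = 0 :=
    LinearMap.ext (hP.differential_apply_differential i)
  have dQ_dQ (j : ℕ) : dQ j ∘ₗ dQ (j + 1) = 0 :=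
    LinearMap.ext (hQ.differential_apply_differential j)
  have εP_dP : εP ∘ₗ dP 0 = 0 := LinearMap.ext hP.augmentation_apply_differential
  have εQ_dQ : εQ ∘ₗ dQ 0 = 0 := LinearMap.ext hQ.augmentation_apply_differential
  refine (c.tensor c' hP.augmentation_apply_differential).isResolution
    (totalAugmentation_comp_totalDifferential (fun x ↦ ?_) fun x ↦ ?_)
    (totalDifferential_comp_totalDifferential (fun i j x ↦ ?_) (fun i j x ↦ ?_) fun i j x ↦ ?_)
  · rw [LinearMap.map_rTensor, εP_dP, TensorProduct.map_zero_left, LinearMap.zero_apply]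
  · rw [LinearMap.map_lTensor, εQ_dQ, TensorProduct.map_zero_right, LinearMap.zero_apply]
  · rw [← LinearMap.rTensor_comp_apply, dP_dP, LinearMap.rTensor_zero, LinearMap.zero_apply]
  · rw [← LinearMap.lTensor_comp_apply, dQ_dQ, LinearMap.lTensor_zero, LinearMap.zero_apply]
  · rw [← LinearMap.comp_apply, ← LinearMap.comp_apply, LinearMap.rTensor_comp_lTensor,
      LinearMap.lTensor_comp_rTensor]

end TensorContraction

theorem stmt7_general {k A B Λ Γ T M N : Type*} [CommRing k] [IsSemisimpleRing k]
    [AddMonoid A] [AddMonoid B] [DecidableEq A] [DecidableEq B]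
    [Ring Λ] [Algebra k Λ] [Ring Γ] [Algebra k Γ] [Ring T] [Algebra k T]
    {𝒜 : A → Submodule k Λ} {ℬ : B → Submodule k Γ} [GradedAlgebra 𝒜] [GradedAlgebra ℬ]
    {t : A → B → kˣ} {e : (Λ ⊗[k] Γ) ≃ₗ[k] T} (hT : IsTwistedTensorAlgebra 𝒜 ℬ t e)
    [AddCommGroup M] [Module k M] [Module Λ M] [IsScalarTower k Λ M] (ℳ : A → Submodule k M)
    [AddCommGroup N] [Module k N] [Module Γ N] [IsScalarTower k Γ N]
    {P : ℕ → Type*} [∀ i, AddCommGroup (P i)] [∀ i, Module k (P i)] [∀ i, Module Λ (P i)]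
    [∀ i, IsScalarTower k Λ (P i)] [∀ i, Module.Projective Λ (P i)]
    (𝓟 : ∀ i, A → Submodule k (P i)) [∀ i, DirectSum.Decomposition (𝓟 i)]
    (h𝓟 : ∀ i, ∀ {a a'} (l : Λ) (p : P i), l ∈ 𝒜 a → p ∈ 𝓟 i a' → l • p ∈ 𝓟 i (a + a'))
    {dP : ∀ i, P (i + 1) →ₗ[Λ] P i} {εP : P 0 →ₗ[Λ] M}
    (hdP : ∀ i a, ∀ p ∈ 𝓟 (i + 1) a, dP i p ∈ 𝓟 i a) (hεP : ∀ a, ∀ p ∈ 𝓟 0 a, εP p ∈ ℳ a)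
    (hP : IsResolution dP εP)
    {Q : ℕ → Type*} [∀ j, AddCommGroup (Q j)] [∀ j, Module k (Q j)] [∀ j, Module Γ (Q j)]
    [∀ j, IsScalarTower k Γ (Q j)] [∀ j, Module.Projective Γ (Q j)]
    {dQ : ∀ j, Q (j + 1) →ₗ[Γ] Q j} {εQ : Q 0 →ₗ[Γ] N} (hQ : IsResolution dQ εQ)
    [∀ i j, Module T (P i ⊗[k] Q j)] [∀ i j, IsScalarTower k T (P i ⊗[k] Q j)]
    (hPQ : ∀ i j, IsTwistedAction (Q j) ℬ t e (𝓟 i))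
    [Module T (M ⊗[k] N)] (hMN : IsTwistedAction N ℬ t e ℳ) :
    ∃ (D : ∀ n, TotalSum (TensorTerm k P Q) (n + 1) →ₗ[T] TotalSum (TensorTerm k P Q) n)
      (E : TotalSum (TensorTerm k P Q) 0 →ₗ[T] M ⊗[k] N),
      (∀ n i j (h : (i + 1) + (j + 1) = n + 1) (p : P (i + 1)) (q : Q (j + 1)),
        D n (TotalSum.inc (TensorTerm k P Q) h (p ⊗ₜ q)) =
          TotalSum.inc (TensorTerm k P Q) (show i + (j + 1) = n by omega) (dP i p ⊗ₜ q) +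
            (-1 : ℤ) ^ (i + 1) •
              TotalSum.inc (TensorTerm k P Q) (show (i + 1) + j = n by omega) (p ⊗ₜ dQ j q)) ∧
      (∀ n j (h : 0 + (j + 1) = n + 1) (p : P 0) (q : Q (j + 1)),
        D n (TotalSum.inc (TensorTerm k P Q) h (p ⊗ₜ q)) =
          TotalSum.inc (TensorTerm k P Q) (show 0 + j = n by omega) (p ⊗ₜ dQ j q)) ∧
      (∀ n i (h : (i + 1) + 0 = n + 1) (p : P (i + 1)) (q : Q 0),
        D n (TotalSum.inc (TensorTerm k P Q) h (p ⊗ₜ q)) =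
          TotalSum.inc (TensorTerm k P Q) (show i + 0 = n by omega) (dP i p ⊗ₜ q)) ∧
      (∀ (p : P 0) (q : Q 0),
        E (TotalSum.inc (TensorTerm k P Q) (add_zero 0) (p ⊗ₜ q)) = εP p ⊗ₜ εQ q) ∧
      (∀ n, Module.Projective T (TotalSum (TensorTerm k P Q) n)) ∧ IsResolution D E := by
  let d₁ (i j) : P (i + 1) ⊗[k] Q j →ₗ[T] P i ⊗[k] Q j :=
    (hPQ (i + 1) j).map (hPQ i j) (dP i) (hdP i) LinearMap.id
  let d₂ (i j) : P i ⊗[k] Q (j + 1) →ₗ[T] P i ⊗[k] Q j :=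
    (hPQ i (j + 1)).map (hPQ i j) LinearMap.id (fun _ _ hp ↦ hp) (dQ j)
  let ε : P 0 ⊗[k] Q 0 →ₗ[T] M ⊗[k] N := (hPQ 0 0).map hMN εP hεP εQ
  have hP' : IsResolution (fun i ↦ (dP i).restrictScalars k) (εP.restrictScalars k) :=
    hP.of_coe_eq (fun _ ↦ rfl) rfl
  have hQ' : IsResolution (fun j ↦ (dQ j).restrictScalars k) (εQ.restrictScalars k) :=
    hQ.of_coe_eq (fun _ ↦ rfl) rfl
  have hproj (i j) : Module.Projective T (P i ⊗[k] Q j) := (hPQ i j).projective hT (h𝓟 i)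
  exact ⟨totalDifferential (X := TensorTerm k P Q) d₁ d₂,
    totalAugmentation (X := TensorTerm k P Q) ε,
    fun _ _ _ h _ _ ↦ totalDifferential_inc_succ_succ h _,
    fun _ _ h _ _ ↦ totalDifferential_inc_zero_succ h _,
    fun _ _ h _ _ ↦ totalDifferential_inc_succ_zero h _,
    fun _ _ ↦ totalAugmentation_inc _ _ _, fun _ ↦ inferInstance,
    (hP'.tensor hQ').of_coe_eq (coe_totalDifferential_congr (fun _ _ ↦ rfl) fun _ _ ↦ rfl)
      (coe_totalAugmentation_congr rfl)⟩

/-- If `P_• → M → 0` is a graded projective resolution of the graded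
`Λ`-module `M` and `Q_• → N → 0` a graded projective resolution of the graded `Γ`-module
`N`, then the total complex of the double complex `P_• ⊗ᵗ Q_•` — with `n`-th term
`⊕_{i+j=n} P_i ⊗ Q_j`, differential `p ⊗ q ↦ dp ⊗ q + (-1)^i p ⊗ dq` and augmentation
`p ⊗ q ↦ ε_P(p) ⊗ ε_Q(q)` — is a graded projective resolution of `M ⊗ᵗ N` over
`T = Λ ⊗ᵗ Γ`. -/
theorem stmt7 {k A B Λ Γ T M N : Type} [Field k]
    [AddCommGroup A] [AddCommGroup B] [DecidableEq A] [DecidableEq B]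
    [Ring Λ] [Algebra k Λ] [Ring Γ] [Algebra k Γ]
    (𝒜 : A → Submodule k Λ) (ℬ : B → Submodule k Γ)
    [GradedAlgebra 𝒜] [GradedAlgebra ℬ]
    (t : A → B → kˣ)
    (ht₁ : ∀ a a' b, t (a + a') b = t a b * t a' b)
    (ht₂ : ∀ a b b', t a (b + b') = t a b * t a b')
    [Ring T] [Algebra k T] (e : (Λ ⊗[k] Γ) ≃ₗ[k] T)
    (he1 : e (1 ⊗ₜ 1) = 1)
    (hemul : ∀ {a b} (x x' : Λ) (y y' : Γ), x' ∈ 𝒜 a → y ∈ ℬ b →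
      e (x ⊗ₜ y) * e (x' ⊗ₜ y') = (t a b : k) • e ((x * x') ⊗ₜ (y * y')))
    -- the graded modules M and N
    [AddCommGroup M] [Module k M] [Module Λ M] [IsScalarTower k Λ M]
    (ℳ : A → Submodule k M) [DirectSum.Decomposition ℳ]
    (hℳ : ∀ {a a'} (l : Λ) (m : M), l ∈ 𝒜 a → m ∈ ℳ a' → l • m ∈ ℳ (a + a'))
    [AddCommGroup N] [Module k N] [Module Γ N] [IsScalarTower k Γ N]
    (𝒩 : B → Submodule k N) [DirectSum.Decomposition 𝒩]
    (h𝒩 : ∀ {b b'} (g : Γ) (n : N), g ∈ ℬ b → n ∈ 𝒩 b' → g • n ∈ 𝒩 (b + b'))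
    -- a graded projective resolution P_• of M over Λ
    (P : ℕ → Type) [∀ i, AddCommGroup (P i)] [∀ i, Module k (P i)]
    [∀ i, Module Λ (P i)] [∀ i, IsScalarTower k Λ (P i)]
    [∀ i, Module.Projective Λ (P i)]
    (𝓟 : ∀ i, A → Submodule k (P i)) [∀ i, DirectSum.Decomposition (𝓟 i)]
    (h𝓟 : ∀ i, ∀ {a a'} (l : Λ) (p : P i), l ∈ 𝒜 a → p ∈ 𝓟 i a' → l • p ∈ 𝓟 i (a + a'))
    (dP : ∀ i, P (i + 1) →ₗ[Λ] P i) (εP : P 0 →ₗ[Λ] M)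
    (hdPgr : ∀ i a, ∀ p ∈ 𝓟 (i + 1) a, dP i p ∈ 𝓟 i a)
    (hεPgr : ∀ a, ∀ p ∈ 𝓟 0 a, εP p ∈ ℳ a)
    (hεPsurj : Function.Surjective εP)
    (hPex0 : LinearMap.ker εP = LinearMap.range (dP 0))
    (hPex : ∀ i, LinearMap.ker (dP i) = LinearMap.range (dP (i + 1)))
    -- a graded projective resolution Q_• of N over Γ
    (Q : ℕ → Type) [∀ j, AddCommGroup (Q j)] [∀ j, Module k (Q j)]
    [∀ j, Module Γ (Q j)] [∀ j, IsScalarTower k Γ (Q j)]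
    [∀ j, Module.Projective Γ (Q j)]
    (𝓠 : ∀ j, B → Submodule k (Q j)) [∀ j, DirectSum.Decomposition (𝓠 j)]
    (h𝓠 : ∀ j, ∀ {b b'} (g : Γ) (q : Q j), g ∈ ℬ b → q ∈ 𝓠 j b' → g • q ∈ 𝓠 j (b + b'))
    (dQ : ∀ j, Q (j + 1) →ₗ[Γ] Q j) (εQ : Q 0 →ₗ[Γ] N)
    (hdQgr : ∀ j b, ∀ q ∈ 𝓠 (j + 1) b, dQ j q ∈ 𝓠 j b)
    (hεQgr : ∀ b, ∀ q ∈ 𝓠 0 b, εQ q ∈ 𝒩 b)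
    (hεQsurj : Function.Surjective εQ)
    (hQex0 : LinearMap.ker εQ = LinearMap.range (dQ 0))
    (hQex : ∀ j, LinearMap.ker (dQ j) = LinearMap.range (dQ (j + 1)))
    -- the twisted T-module structures on the tensor products
    [∀ i j, Module T (P i ⊗[k] Q j)] [∀ i j, IsScalarTower k T (P i ⊗[k] Q j)]
    (hactPQ : ∀ (i j : ℕ) (am : A) (bg : B) (l : Λ) (g : Γ) (p : P i) (q : Q j),
      g ∈ ℬ bg → p ∈ 𝓟 i am →
      e (l ⊗ₜ g) • (p ⊗ₜ q : P i ⊗[k] Q j) = (t am bg : k) • ((l • p) ⊗ₜ (g • q)))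
    [Module T (M ⊗[k] N)] [IsScalarTower k T (M ⊗[k] N)]
    (hactMN : ∀ (am : A) (bg : B) (l : Λ) (g : Γ) (m : M) (n : N),
      g ∈ ℬ bg → m ∈ ℳ am →
      e (l ⊗ₜ g) • (m ⊗ₜ n : M ⊗[k] N) = (t am bg : k) • ((l • m) ⊗ₜ (g • n))) :
    -- the total complex, with terms `Tot n = ⊕_{i+j=n} P i ⊗ Q j`
    ∃ (D : ∀ n : ℕ,
        (⨁ (p : {p : ℕ × ℕ // p.1 + p.2 = n + 1}), TotTerm k P Q p) →ₗ[T]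
        (⨁ (p : {p : ℕ × ℕ // p.1 + p.2 = n}), TotTerm k P Q p))
      (εT : (⨁ (p : {p : ℕ × ℕ // p.1 + p.2 = 0}), TotTerm k P Q p) →ₗ[T]
        (M ⊗[k] N)),
      -- the differential is the usual signed total differential
      (∀ (n i j : ℕ) (h : (i + 1) + (j + 1) = n + 1) (p : P (i + 1)) (q : Q (j + 1)),
        D n (DirectSum.lof T _ (TotTerm k P Q) ⟨(i + 1, j + 1), h⟩
            (p ⊗ₜ q)) =
          DirectSum.lof T _ (TotTerm k P Q) ⟨(i, j + 1), by omega⟩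
              ((dP i p) ⊗ₜ q) +
            ((-1 : ℤ) ^ (i + 1)) •
              DirectSum.lof T _ (TotTerm k P Q) ⟨(i + 1, j), by omega⟩
                (p ⊗ₜ (dQ j q))) ∧
      (∀ (n j : ℕ) (h : 0 + (j + 1) = n + 1) (p : P 0) (q : Q (j + 1)),
        D n (DirectSum.lof T _ (TotTerm k P Q) ⟨(0, j + 1), h⟩
            (p ⊗ₜ q)) =
          DirectSum.lof T _ (TotTerm k P Q) ⟨(0, j), by omega⟩
            (p ⊗ₜ (dQ j q))) ∧
      (∀ (n i : ℕ) (h : (i + 1) + 0 = n + 1) (p : P (i + 1)) (q : Q 0),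
        D n (DirectSum.lof T _ (TotTerm k P Q) ⟨(i + 1, 0), h⟩
            (p ⊗ₜ q)) =
          DirectSum.lof T _ (TotTerm k P Q) ⟨(i, 0), by omega⟩
            ((dP i p) ⊗ₜ q)) ∧
      -- the augmentation is `ε_P ⊗ ε_Q`
      (∀ (p : P 0) (q : Q 0),
        εT (DirectSum.lof T _ (TotTerm k P Q) ⟨(0, 0), rfl⟩ (p ⊗ₜ q)) =
          (εP p) ⊗ₜ (εQ q)) ∧
      -- each term is a projective T-module
      (∀ n : ℕ, Module.Projective T
        (⨁ (p : {p : ℕ × ℕ // p.1 + p.2 = n}), TotTerm k P Q p)) ∧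
      -- exactness: a resolution of `M ⊗ᵗ N`
      Function.Surjective εT ∧
      LinearMap.ker εT = LinearMap.range (D 0) ∧
      (∀ n, LinearMap.ker (D n) = LinearMap.range (D (n + 1))) := by
  obtain ⟨D, E, h₁, h₂, h₃, h₄, hproj, hres⟩ := stmt7_general ⟨⟨ht₁, ht₂⟩, he1, hemul⟩ ℳ 𝓟 h𝓟
    hdPgr hεPgr ⟨hεPsurj, hPex0, hPex⟩ ⟨hεQsurj, hQex0, hQex⟩ hactPQ hactMN
  exact ⟨D, E, h₁, h₂, h₃, h₄, hproj, hres.surjective, hres.ker_augmentation, hres.ker_differential⟩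
end
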